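/- Let ψ_0, ψ_1 ∈ S(ℝ^n) satisfy |ψ_0(x)| > 0 on {|x| ≤ kε} and |ψ_1(x)| > 0 on {ε ≤ |x| ≤ 2kε} for some ε > 0 and k ∈ (1,2]; set ψ_j(x) := ψ_1(2^{−j+1}x) for j ≥ 2 and Ψ_j := ψ̂_j. Let t > 0, N ∈ ℕ_0 and 0 < a ≤ N. Then there exists c > 0 such that for every f ∈ S'(ℝ^n), every ν ∈ ℕ_0 and every x ∈ ℝ^n: ((Ψ_ν^* f)_a(x))^t ≤ c ∑_{j=0}^∞ 2^{−jNt} 2^{(j+ν)n} ∫_{ℝ^n} |(Ψ_{j+ν} ∗ f)(z)|^t / (1 + |2^ν(x−z)|^a)^t dz. -/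

import Mathlib

open MeasureTheory ENNReal Real
open scoped FourierTransform

noncomputable section

/-- Euclidean space `ℝ^n`. -/
abbrev Rn (n : ℕ) : Type := EuclideanSpace ℝ (Fin n)

variable {n : ℕ}

/-- The function `φ_t(s)` used in the semimodular of variable exponent Lebesgue spaces:
`φ_t(s) = s^t` for `t < ∞`, while `φ_∞(s) = 0` for `s ≤ 1` and `= ∞` for `s > 1`. -/
def phiVE (t : ℝ≥0∞) (s : ℝ≥0∞) : ℝ≥0∞ :=
  if t = ∞ then (if s ≤ 1 then 0 else ∞) else s ^ t.toReal

/-- The semimodular `ρ_p` of variable exponent Lebesgue spaces. -/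
def modularVE (p : Rn n → ℝ≥0∞) (g : Rn n → ℝ≥0∞) : ℝ≥0∞ :=
  ∫⁻ x, phiVE (p x) (g x)

/-- The variable exponent Lebesgue quasi-norm `‖·‖_{L^{p(·)}(ℝ^n)}`, applied to the
(pointwise) absolute value of a function, i.e. to `[0,∞]`-valued functions.
(For `p⁻ ≥ 1` this is the usual Luxemburg norm; for general `p` it agrees with the
definition via `‖f‖ = ‖|f|^t‖_{L^{p/t}}^{1/t}`.) -/
def vLpNorm (p : Rn n → ℝ≥0∞) (g : Rn n → ℝ≥0∞) : ℝ≥0∞ :=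
  sInf {lam : ℝ≥0∞ | modularVE p (fun x => g x / lam) ≤ 1}

/-- A variable exponent: a measurable function `p : ℝ^n → (0,∞]` with `p⁻ = ess inf p > 0`. -/
def IsVarExp (p : Rn n → ℝ≥0∞) : Prop :=
  Measurable p ∧ (∀ x, 0 < p x) ∧ 0 < essInf p (volume : Measure (Rn n))

/-- Local log-Hölder continuity of `g : ℝ^n → ℝ`. -/
def LocLogHolder (g : Rn n → ℝ) : Prop :=
  ∃ c > 0, ∀ x y : Rn n, |g x - g y| ≤ c / Real.log (Real.exp 1 + (dist x y)⁻¹)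

/-- Log-Hölder decay of `g` at infinity, with limit value `gInf` and constant `c`. -/
def LogDecay (g : Rn n → ℝ) (gInf c : ℝ) : Prop :=
  ∀ x : Rn n, |g x - gInf| ≤ c / Real.log (Real.exp 1 + ‖x‖)

/-- `p ∈ P^log(ℝ^n)`, with prescribed limit value `pinvInf = 1/p_∞` of `1/p` at infinity. -/
def IsPLogWith (p : Rn n → ℝ≥0∞) (pinvInf : ℝ) : Prop :=
  IsVarExp p ∧ LocLogHolder (fun x => (p x)⁻¹.toReal) ∧
    ∃ c > 0, LogDecay (fun x => (p x)⁻¹.toReal) pinvInf c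

/-- `p ∈ P^log(ℝ^n)`. -/
def IsPLog (p : Rn n → ℝ≥0∞) : Prop := ∃ pinvInf : ℝ, IsPLogWith p pinvInf

/-- The Morrey quasi-norm `‖·‖_{M^{u(·)}_{p(·)}(ℝ^n)}` of a `[0,∞]`-valued function:
`sup_{x, r>0} r^{n(1/u(x) - 1/p(x))} ‖f‖_{L^{p(·)}(B_r(x))}`. -/
def morreyNorm (p u : Rn n → ℝ≥0∞) (g : Rn n → ℝ≥0∞) : ℝ≥0∞ :=
  ⨆ (x : Rn n) (r : ℝ) (_ : 0 < r),
    ENNReal.ofReal (r ^ ((n : ℝ) * ((u x)⁻¹.toReal - (p x)⁻¹.toReal))) *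
      vLpNorm p ((Metric.ball x r).indicator g)

/-- The `ℓ^q` (quasi-)norm of a sequence in `[0,∞]`, with the usual modification for `q = ∞`. -/
def lqNorm (q : ℝ≥0∞) (a : ℕ → ℝ≥0∞) : ℝ≥0∞ :=
  if q = ∞ then ⨆ ν, a ν else (∑' ν, a ν ^ q.toReal) ^ (1 / q.toReal)

/-- The vector-valued Morrey quasi-norm `‖(f_ν)_ν‖_{M^{u(·)}_{p(·)}(ℓ^{q(·)})}`. -/
def morreySeqNorm (p u q : Rn n → ℝ≥0∞) (f : ℕ → Rn n → ℝ≥0∞) : ℝ≥0∞ :=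
  morreyNorm p u (fun x => lqNorm (q x) (fun ν => f ν x))

/-- The kernel `η_{ν,m}(x) = 2^{νn} (1 + 2^ν |x|)^{-m}`. -/
def etaK (ν : ℕ) (m : ℝ) (x : Rn n) : ℝ≥0∞ :=
  ENNReal.ofReal ((2 : ℝ) ^ (ν * n) * (1 + 2 ^ ν * ‖x‖) ^ (-m))

/-- Convolution of `[0,∞]`-valued functions. -/
def lconv (f g : Rn n → ℝ≥0∞) (x : Rn n) : ℝ≥0∞ := ∫⁻ y, f (x - y) * g y

/-- The constant `c_{p,u} = max(0, sup_x (1/p(x) - 1/u(x)) - 1/p_∞)`. -/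
def cpu (p u : Rn n → ℝ≥0∞) (pinvInf : ℝ) : ℝ :=
  max 0 ((⨆ x : Rn n, ((p x)⁻¹.toReal - (u x)⁻¹.toReal)) - pinvInf)

/-- Tempered distributions on `ℝ^n`. -/
abbrev TemperedDist (n : ℕ) : Type := SchwartzMap (Rn n) ℂ →L[ℂ] ℂ

lemma hasTemperateGrowth_reflectTranslate (y : Rn n) :
    Function.HasTemperateGrowth (fun z : Rn n => y - z) := by
  have hd : Differentiable ℝ (fun z : Rn n => y - z) :=
    (differentiable_const y).sub differentiable_id
  have hfd : fderiv ℝ (fun z : Rn n => y - z)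
      = fun _ => -(ContinuousLinearMap.id ℝ (Rn n)) := by
    funext z
    rw [fderiv_const_sub, fderiv_id']
  refine Function.HasTemperateGrowth.of_fderiv (k := 1) (C := ‖y‖ + 1) ?_ hd ?_
  · rw [hfd]; exact .const _
  · intro x
    calc ‖y - x‖ ≤ ‖y‖ + ‖x‖ := norm_sub_le _ _
      _ ≤ (‖y‖ + 1) * (1 + ‖x‖) ^ 1 := by
          have h1 := norm_nonneg x
          have h2 := norm_nonneg y
          nlinarith

/-- The map `z ↦ Ψ (y - z)`, as a Schwartz function. -/
def reflectTranslate (y : Rn n) (Ψ : SchwartzMap (Rn n) ℂ) : SchwartzMap (Rn n) ℂ :=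
  SchwartzMap.compCLMOfAntilipschitz (𝕜 := ℂ) (K := 1)
    (hasTemperateGrowth_reflectTranslate y)
    ((Isometry.of_dist_eq (fun z z' => dist_sub_left y z z')).antilipschitz) Ψ

@[simp] lemma reflectTranslate_apply (y : Rn n) (Ψ : SchwartzMap (Rn n) ℂ) (z : Rn n) :
    reflectTranslate y Ψ z = Ψ (y - z) := rfl

/-- The convolution `(Ψ ∗ f)(y) = f(Ψ(y - ·))` of a Schwartz function `Ψ` with a tempered
distribution `f`. -/
def distConv (Ψ : SchwartzMap (Rn n) ℂ) (f : TemperedDist n) (y : Rn n) : ℂ :=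
  f (reflectTranslate y Ψ)

/-- The Peetre maximal function at level `j`, with parameter `a`, of a function `F`
(to be applied with `F = Ψ_j ∗ f`):  `sup_y ‖F y‖ / (1 + |2^j (y - x)|^a)`. -/
def peetreMax (a : ℝ) (j : ℕ) (F : Rn n → ℂ) (x : Rn n) : ℝ≥0∞ :=
  ⨆ y : Rn n, (‖F y‖₊ : ℝ≥0∞) / ENNReal.ofReal (1 + ((2 : ℝ) ^ j * ‖y - x‖) ^ a)

/-- Admissible weight sequences from the class `W^α_{α₁,α₂}`, with constant `C` in
condition (i). -/
def AdmissibleWeights (al al1 al2 C : ℝ) (w : ℕ → Rn n → ℝ) : Prop :=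
  (∀ j, Measurable (w j)) ∧
  (∀ (j : ℕ) (x y : Rn n), 0 < w j x ∧ w j x ≤ C * w j y * (1 + 2 ^ j * ‖x - y‖) ^ al) ∧
  (∀ (j : ℕ) (x : Rn n), 2 ^ al1 * w j x ≤ w (j + 1) x ∧ w (j + 1) x ≤ 2 ^ al2 * w j x)

/-- An admissible pair `(φ̌, Φ̌)`, described through the generating functions `φ, Φ`. -/
def AdmissiblePair (phi Phi : SchwartzMap (Rn n) ℂ) : Prop :=
  (Function.support ⇑phi ⊆ {x : Rn n | 1 / 2 ≤ ‖x‖ ∧ ‖x‖ ≤ 2}) ∧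
  (Function.support ⇑Phi ⊆ {x : Rn n | ‖x‖ ≤ 2}) ∧
  ∃ c > 0, (∀ x : Rn n, 3 / 5 ≤ ‖x‖ → ‖x‖ ≤ 5 / 3 → c ≤ ‖phi x‖) ∧
    (∀ x : Rn n, ‖x‖ ≤ 5 / 3 → c ≤ ‖Phi x‖)

/-!
Choose a cut-off `χ`, equal to `1` near the origin, and `λ`, vanishing near the origin, such that
`λ ψ₁ = χ(·/2) - χ`. The sum telescopes to the Calderón reproducing formula
`ψ_ν = ∑_j K_j(2^{-ν} ·) ψ_{j+ν}` in the Schwartz space. As `λ` vanishes near the origin, the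
Fourier transforms of the `K_j` are `O(2^{-jM} (1 + |x|)^{-L})` for all `M` and `L`, uniformly in
`ν`, so that `|Ψ_ν ∗ f|` is bounded by a sum of weighted means of the functions `|Ψ_{j+ν} ∗ f|`.

For `t ≥ 1` Jensen's inequality raises this bound to the power `t`. For `t ≤ 1` we follow
Strömberg and Torchinsky: taking out the power `1 - t` of the maximal function
`A = sup_{j,y} 2^{-jσ} (1 + 2^ν |x - y|)^{-β} |Ψ_{j+ν} ∗ f(y)|` turns the bound into
`A ≤ C A^{1-t} B`, with `B` the weighted mean of the functions `|Ψ_{j+ν} ∗ f|^t`, hence `A^t ≤ C B`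
when `A` is finite. Finiteness is clear only for exponents above the order of growth of `f`. The
bound for these, with a constant depending on `f`, shows that `A` is finite for all exponents for
which `B` is, and then `A^t ≤ C B` holds with a constant independent of `f`.

The weights are submultiplicative, so an estimate at every point `y` gives one for the
Peetre maximal function.
-/

section

open Function FourierTransform LineDeriv Filter Topology
open scoped SchwartzMap BoundedContinuousFunction ContDiff NNReal

section SchwartzNorm

variable {𝕜 E F : Type*} [NormedAddCommGroup E] [NormedSpace ℝ E] [NormedAddCommGroup F]
  [NormedSpace ℝ F]

section NormedField

variable [NormedField 𝕜] [NormedSpace 𝕜 F] [SMulCommClass ℝ 𝕜 F]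

variable (𝕜) in
/-- The supremum of the Schwartz seminorms with both indices at most `N`. These seminorms increase
with `N` and generate the topology of the Schwartz space. -/
def schwartzNorm (N : ℕ) : Seminorm 𝕜 𝓢(E, F) :=
  (Finset.Iic (N, N)).sup (schwartzSeminormFamily 𝕜 E F)

lemma seminorm_le_schwartzNorm {k l N : ℕ} (hk : k ≤ N) (hl : l ≤ N) :
    schwartzSeminormFamily 𝕜 E F (k, l) ≤ schwartzNorm 𝕜 N :=
  Finset.le_sup (f := schwartzSeminormFamily 𝕜 E F) (Finset.mem_Iic.2 ⟨hk, hl⟩)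

lemma schwartzNorm_le_of_forall {N : ℕ} {φ : 𝓢(E, F)} {C : ℝ} (hC : 0 ≤ C)
    (h : ∀ k ≤ N, ∀ l ≤ N, ∀ x, ‖x‖ ^ k * ‖iteratedFDeriv ℝ l φ x‖ ≤ C) :
    schwartzNorm 𝕜 N φ ≤ C :=
  Seminorm.finset_sup_apply_le hC fun i hi =>
    SchwartzMap.seminorm_le_bound 𝕜 i.1 i.2 φ hC
      (h i.1 (Finset.mem_Iic.1 hi).1 i.2 (Finset.mem_Iic.1 hi).2)

lemma pow_mul_norm_iteratedFDeriv_le_schwartzNorm {k l N : ℕ} (hk : k ≤ N) (hl : l ≤ N)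
    (φ : 𝓢(E, F)) (x : E) : ‖x‖ ^ k * ‖iteratedFDeriv ℝ l φ x‖ ≤ schwartzNorm 𝕜 N φ :=
  (SchwartzMap.le_seminorm 𝕜 k l φ x).trans (seminorm_le_schwartzNorm hk hl φ)

lemma one_add_pow_mul_norm_iteratedFDeriv_le_schwartzNorm {k l N : ℕ} (hk : k ≤ N) (hl : l ≤ N)
    (φ : 𝓢(E, F)) (x : E) :
    (1 + ‖x‖) ^ k * ‖iteratedFDeriv ℝ l φ x‖ ≤ 2 ^ N * schwartzNorm 𝕜 N φ :=
  SchwartzMap.one_add_le_sup_seminorm_apply (𝕜 := 𝕜) (m := (N, N)) hk hl φ x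

lemma continuous_schwartzNorm (N : ℕ) : Continuous (schwartzNorm 𝕜 N : Seminorm 𝕜 𝓢(E, F)) :=
  Seminorm.continuous_finsetSup fun i _ => (schwartz_withSeminorms 𝕜 E F).continuous_seminorm i

lemma tendsto_of_tendsto_schwartzNorm {ι : Type*} {u : ι → 𝓢(E, F)} {L : Filter ι} {φ : 𝓢(E, F)}
    (h : ∀ N, Tendsto (fun i => schwartzNorm 𝕜 N (u i - φ)) L (𝓝 0)) : Tendsto u L (𝓝 φ) := by
  rw [(schwartz_withSeminorms 𝕜 E F).tendsto_nhds]
  rintro ⟨k, l⟩ ε hε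
  filter_upwards [(h (max k l)).eventually_lt_const hε] with i hi
  exact (seminorm_le_schwartzNorm (le_max_left k l) (le_max_right k l) _).trans_lt hi

end NormedField

section RCLike

variable [RCLike 𝕜] [NormedSpace 𝕜 F] [SMulCommClass ℝ 𝕜 F]

lemma exists_le_schwartzNorm {p : Seminorm 𝕜 𝓢(E, F)} (hp : Continuous p) :
    ∃ N, ∃ C : ℝ≥0, ∀ φ, p φ ≤ C * schwartzNorm 𝕜 N φ := by
  obtain ⟨s, C, -, hC⟩ := Seminorm.bound_of_continuous (schwartz_withSeminorms 𝕜 E F) p hp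
  refine ⟨s.sup fun i => max i.1 i.2, C, fun φ => (hC φ).trans ?_⟩
  have hs : s.sup (schwartzSeminormFamily 𝕜 E F) ≤ schwartzNorm 𝕜 (s.sup fun i => max i.1 i.2) :=
    Finset.sup_le fun i hi =>
      have hmax := Finset.le_sup (f := fun i : ℕ × ℕ => max i.1 i.2) hi
      seminorm_le_schwartzNorm ((le_max_left _ _).trans hmax) ((le_max_right _ _).trans hmax)
  exact mul_le_mul_of_nonneg_left (hs φ) C.2

lemma exists_schwartzNorm_map_le (T : 𝓢(E, F) →L[𝕜] 𝓢(E, F)) (N : ℕ) :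
    ∃ M, ∃ C : ℝ≥0, ∀ φ, schwartzNorm 𝕜 N (T φ) ≤ C * schwartzNorm 𝕜 M φ :=
  exists_le_schwartzNorm (p := (schwartzNorm 𝕜 N : Seminorm 𝕜 𝓢(E, F)).comp T.toLinearMap)
    ((continuous_schwartzNorm N).comp T.continuous)

end RCLike

/-! ### Translations -/

lemma one_add_norm_le_mul {G : Type*} [SeminormedAddCommGroup G] (x y : G) :
    1 + ‖x‖ ≤ (1 + ‖y‖) * (1 + ‖x - y‖) := by
  nlinarith [norm_le_norm_add_norm_sub' x y, norm_nonneg y, norm_nonneg (x - y)]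

section Translation

variable [RCLike 𝕜] [NormedSpace 𝕜 F]

lemma iteratedFDeriv_compSubConstCLM (l : ℕ) (h : E) (φ : 𝓢(E, F)) (x : E) :
    iteratedFDeriv ℝ l (φ.compSubConstCLM 𝕜 h) x = iteratedFDeriv ℝ l φ (x - h) :=
  iteratedFDeriv_comp_sub l h x

variable [SMulCommClass ℝ 𝕜 F]

lemma schwartzNorm_compSubConstCLM_le (N : ℕ) (h : E) (φ : 𝓢(E, F)) :
    schwartzNorm 𝕜 N (φ.compSubConstCLM 𝕜 h) ≤
      2 ^ N * (1 + ‖h‖) ^ N * schwartzNorm 𝕜 N φ := by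
  refine schwartzNorm_le_of_forall (by positivity) fun k hk l hl x => ?_
  have hx : ‖x‖ ≤ (1 + ‖h‖) * (1 + ‖x - h‖) := by linarith [one_add_norm_le_mul x h]
  rw [iteratedFDeriv_compSubConstCLM]
  calc ‖x‖ ^ k * ‖iteratedFDeriv ℝ l φ (x - h)‖
      ≤ ((1 + ‖h‖) * (1 + ‖x - h‖)) ^ k * ‖iteratedFDeriv ℝ l φ (x - h)‖ := by gcongr
    _ = (1 + ‖h‖) ^ k * ((1 + ‖x - h‖) ^ k * ‖iteratedFDeriv ℝ l φ (x - h)‖) := by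
        rw [mul_pow, mul_assoc]
    _ ≤ (1 + ‖h‖) ^ N * (2 ^ N * schwartzNorm 𝕜 N φ) := by
        refine mul_le_mul ?_ (one_add_pow_mul_norm_iteratedFDeriv_le_schwartzNorm hk hl φ _)
          (by positivity) (by positivity)
        exact pow_le_pow_right₀ (by linarith [norm_nonneg h]) hk
    _ = 2 ^ N * (1 + ‖h‖) ^ N * schwartzNorm 𝕜 N φ := by ring

lemma norm_iteratedFDeriv_sub_le (φ : 𝓢(E, F)) {l : ℕ} {x h : E} {C : ℝ}
    (hC : ∀ w ∈ segment ℝ x (x - h), ‖iteratedFDeriv ℝ (l + 1) φ w‖ ≤ C) :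
    ‖iteratedFDeriv ℝ l φ (x - h) - iteratedFDeriv ℝ l φ x‖ ≤ C * ‖h‖ := by
  have hdiff : Differentiable ℝ (iteratedFDeriv ℝ l φ) :=
    (φ.smooth ⊤).differentiable_iteratedFDeriv (mod_cast WithTop.coe_lt_top _)
  simpa using (convex_segment x (x - h)).norm_image_sub_le_of_norm_fderiv_le (𝕜 := ℝ)
    (fun w _ => hdiff w) (fun w hw => norm_fderiv_iteratedFDeriv.trans_le (hC w hw))
    (left_mem_segment ℝ _ _) (right_mem_segment ℝ _ _)

lemma schwartzNorm_compSubConstCLM_sub_le (N : ℕ) {h : E} (hh : ‖h‖ ≤ 1) (φ : 𝓢(E, F)) :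
    schwartzNorm 𝕜 N (φ.compSubConstCLM 𝕜 h - φ) ≤
      2 ^ (N + 1) * schwartzNorm 𝕜 (N + 1) φ * ‖h‖ := by
  refine schwartzNorm_le_of_forall (by positivity) fun k hk l hl x => ?_
  have hD : iteratedFDeriv ℝ l (φ.compSubConstCLM 𝕜 h - φ) x =
      iteratedFDeriv ℝ l φ (x - h) - iteratedFDeriv ℝ l φ x := by
    rw [FunLike.coe_sub, iteratedFDeriv_sub_apply ((φ.compSubConstCLM 𝕜 h).smooth l).contDiffAt
      (φ.smooth l).contDiffAt, iteratedFDeriv_compSubConstCLM]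
  rcases eq_or_ne (‖x‖ ^ k) 0 with hx0 | hx0
  · rw [hx0, zero_mul]; positivity
  have hx0 : 0 < ‖x‖ ^ k := lt_of_le_of_ne (by positivity) hx0.symm
  have hsegment : ∀ w ∈ segment ℝ x (x - h), ‖iteratedFDeriv ℝ (l + 1) φ w‖ ≤
      2 ^ (N + 1) * schwartzNorm 𝕜 (N + 1) φ / ‖x‖ ^ k := fun w hw => by
    have hwx : ‖w - x‖ ≤ 1 := by simpa using (norm_sub_le_of_mem_segment hw).trans (by simpa)
    have hxw : ‖x‖ ≤ 1 + ‖w‖ := by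
      linarith [norm_le_norm_add_norm_sub' x w, norm_sub_rev w x]
    rw [le_div_iff₀ hx0, mul_comm]
    exact (mul_le_mul_of_nonneg_right (by gcongr) (norm_nonneg _)).trans
      (one_add_pow_mul_norm_iteratedFDeriv_le_schwartzNorm (k := k) (by lia) (by lia) φ w)
  rw [hD]
  calc _ ≤ ‖x‖ ^ k * (2 ^ (N + 1) * schwartzNorm 𝕜 (N + 1) φ / ‖x‖ ^ k * ‖h‖) := by
        gcongr; exact norm_iteratedFDeriv_sub_le φ hsegment
    _ = _ := by field_simp

lemma continuous_compSubConstCLM (φ : 𝓢(E, F)) :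
    Continuous fun h => φ.compSubConstCLM 𝕜 h := by
  have hzero : Tendsto (fun h => φ.compSubConstCLM 𝕜 h) (𝓝 0) (𝓝 φ) := by
    refine tendsto_of_tendsto_schwartzNorm (𝕜 := 𝕜) fun N => ?_
    have hlim : Tendsto (fun h : E => 2 ^ (N + 1) * schwartzNorm 𝕜 (N + 1) φ * ‖h‖) (𝓝 0) (𝓝 0) :=
      by simpa using (tendsto_norm_zero (E := E)).const_mul _
    refine squeeze_zero' (.of_forall fun _ => apply_nonneg _ _) ?_ hlim
    filter_upwards [Metric.closedBall_mem_nhds (0 : E) one_pos] with h hh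
    exact schwartzNorm_compSubConstCLM_sub_le N (by simpa using hh) φ
  refine continuous_iff_continuousAt.2 fun a => ?_
  have hsub : Tendsto (fun h : E => h - a) (𝓝 a) (𝓝 0) := by
    simpa using (continuous_sub_right a).tendsto a
  refine (((SchwartzMap.compSubConstCLM 𝕜 a).continuous.tendsto φ).comp
    (hzero.comp hsub)).congr fun h => ?_
  simp

end Translation

end SchwartzNorm

/-! ### Tempered distributions and Schwartz-valued integrals -/

section SchwartzIntegral

variable {𝕜 E F : Type*} [RCLike 𝕜] [NormedAddCommGroup E] [NormedSpace ℝ E]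
  [NormedAddCommGroup F] [NormedSpace ℝ F] [NormedSpace 𝕜 F] [SMulCommClass ℝ 𝕜 F]

/-- The weighted derivative `x ↦ ‖x‖ ^ k • D^l φ x` of a Schwartz function, as a bounded continuous
function. -/
def weightedDeriv (k l : ℕ) (φ : 𝓢(E, F)) : E →ᵇ E [×l]→L[ℝ] F :=
  BoundedContinuousFunction.ofNormedAddCommGroup (fun x => ‖x‖ ^ k • iteratedFDeriv ℝ l φ x)
    ((continuous_norm.pow k).smul
      ((φ.smooth ⊤).continuous_iteratedFDeriv (mod_cast le_top)))
    (SchwartzMap.seminorm ℝ k l φ) fun x => by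
      simpa [norm_smul] using SchwartzMap.le_seminorm ℝ k l φ x

variable (E F) in
/-- Families of bounded continuous functions with the same types as the weighted derivatives of a
Schwartz function with indices at most `N`. -/
def WeightedDerivSpace (N : ℕ) : Type _ :=
  ∀ i : Finset.Iic (N, N), E →ᵇ E [×i.1.2]→L[ℝ] F

instance (N : ℕ) : NormedAddCommGroup (WeightedDerivSpace E F N) :=
  Pi.normedAddCommGroup

instance (N : ℕ) : NormedSpace 𝕜 (WeightedDerivSpace E F N) :=
  Pi.normedSpace

instance [CompleteSpace F] (N : ℕ) : CompleteSpace (WeightedDerivSpace E F N) :=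
  Pi.complete _

variable (𝕜) in
/-- All weighted derivatives with indices at most `N`. They embed the Schwartz space with the
seminorm `schwartzNorm 𝕜 N` isometrically into a Banach space, in which Schwartz-valued integrals
can be formed. -/
def weightedDerivs (N : ℕ) : 𝓢(E, F) →ₗ[𝕜] WeightedDerivSpace E F N where
  toFun φ i := weightedDeriv i.1.1 i.1.2 φ
  map_add' φ φ' := by
    refine funext fun i => BoundedContinuousFunction.ext fun x => ?_
    refine Eq.trans ?_ (smul_add (‖x‖ ^ i.1.1) _ _)
    exact congrArg (‖x‖ ^ i.1.1 • ·)
      (iteratedFDeriv_add_apply (φ.smooth _).contDiffAt (φ'.smooth _).contDiffAt)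
  map_smul' c φ := by
    refine funext fun i => BoundedContinuousFunction.ext fun x => ?_
    refine Eq.trans ?_ (smul_comm (‖x‖ ^ i.1.1) c _)
    exact congrArg (‖x‖ ^ i.1.1 • ·)
      (iteratedFDeriv_const_smul_apply (φ.smooth _).contDiffAt)

lemma weightedDerivs_apply (N : ℕ) (φ : 𝓢(E, F)) (i : Finset.Iic (N, N)) (x : E) :
    weightedDerivs 𝕜 N φ i x = ‖x‖ ^ i.1.1 • iteratedFDeriv ℝ i.1.2 φ x :=
  rfl

lemma norm_weightedDerivs (N : ℕ) (φ : 𝓢(E, F)) :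
    ‖weightedDerivs 𝕜 N φ‖ = schwartzNorm 𝕜 N φ := by
  have hnorm (i : Finset.Iic (N, N)) (x : E) : ‖weightedDerivs 𝕜 N φ i x‖ =
      ‖x‖ ^ i.1.1 * ‖iteratedFDeriv ℝ i.1.2 φ x‖ := by
    simp [weightedDerivs_apply, norm_smul]
  refine le_antisymm ((pi_norm_le_iff_of_nonneg (apply_nonneg _ _)).2 fun i =>
    (BoundedContinuousFunction.norm_le (apply_nonneg _ _)).2 fun x => ?_)
    (schwartzNorm_le_of_forall (norm_nonneg _) fun k hk l hl x => ?_)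
  · obtain ⟨hk, hl⟩ := Finset.mem_Iic.1 i.2
    exact (hnorm i x).trans_le (pow_mul_norm_iteratedFDeriv_le_schwartzNorm hk hl φ x)
  · let i : Finset.Iic (N, N) := ⟨(k, l), Finset.mem_Iic.2 ⟨hk, hl⟩⟩
    exact (hnorm i x).ge.trans (((weightedDerivs 𝕜 N φ i).norm_coe_le_norm x).trans
      (norm_le_pi_norm (G := fun i : Finset.Iic (N, N) => E →ᵇ E [×i.1.2]→L[ℝ] F)
        (weightedDerivs 𝕜 N φ) i))

lemma continuous_weightedDerivs (N : ℕ) :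
    Continuous (weightedDerivs 𝕜 N : 𝓢(E, F) →ₗ[𝕜] WeightedDerivSpace E F N) := by
  refine continuous_of_continuousAt_zero _ ?_
  rw [ContinuousAt, map_zero, tendsto_zero_iff_norm_tendsto_zero]
  simpa only [norm_weightedDerivs, map_zero] using
    (continuous_schwartzNorm (𝕜 := 𝕜) (E := E) (F := F) N).tendsto 0

lemma exists_eq_comp_of_norm_le {V W : Type*} [AddCommGroup V] [Module 𝕜 V]
    [NormedAddCommGroup W] [NormedSpace 𝕜 W] (f : V →ₗ[𝕜] 𝕜) (T : V →ₗ[𝕜] W) (C : ℝ)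
    (h : ∀ v, ‖f v‖ ≤ C * ‖T v‖) : ∃ L : W →L[𝕜] 𝕜, ∀ v, f v = L (T v) := by
  have hker : LinearMap.ker T ≤ LinearMap.ker f := fun v hv => by
    simpa [LinearMap.mem_ker.1 hv] using h v
  let g : LinearMap.range T →ₗ[𝕜] 𝕜 :=
    ((LinearMap.ker T).liftQ f hker).comp T.quotKerEquivRange.symm.toLinearMap
  have hg (v : V) : g ⟨T v, LinearMap.mem_range_self T v⟩ = f v := by
    simp [g, T.quotKerEquivRange_symm_apply_image v]
  obtain ⟨L, hL, -⟩ := exists_extension_norm_eq _ (g.mkContinuous C <| by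
    rintro ⟨-, v, rfl⟩
    exact (congrArg norm (hg v)).trans_le (h v))
  exact ⟨L, fun v => (hg v).symm.trans (hL ⟨T v, LinearMap.mem_range_self T v⟩).symm⟩

lemma exists_eq_comp_weightedDerivs (f : 𝓢(E, F) →L[𝕜] 𝕜) :
    ∃ N, ∃ L : WeightedDerivSpace E F N →L[𝕜] 𝕜,
      ∀ φ, f φ = L (weightedDerivs 𝕜 N φ) := by
  obtain ⟨N, C, hC⟩ := exists_le_schwartzNorm (𝕜 := 𝕜)
    (p := (normSeminorm 𝕜 𝕜).comp f.toLinearMap) (continuous_norm.comp f.continuous)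
  exact ⟨N, exists_eq_comp_of_norm_le f.toLinearMap (weightedDerivs 𝕜 N) C fun φ => by
    rw [norm_weightedDerivs]; exact hC φ⟩

variable {Z : Type*} [TopologicalSpace Z] [SecondCountableTopology Z] [MeasurableSpace Z]
  [OpensMeasurableSpace Z] {μ : Measure Z}

lemma integrable_smul_weightedDerivs {K : Z → 𝕜} {Φ : Z → 𝓢(E, F)} (hK : Continuous K)
    (hΦ : Continuous Φ) {N : ℕ} (hint : Integrable (fun z => ‖K z‖ * schwartzNorm 𝕜 N (Φ z)) μ) :
    Integrable (fun z => K z • weightedDerivs 𝕜 N (Φ z)) μ :=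
  hint.mono' (hK.smul ((continuous_weightedDerivs N).comp hΦ)).aestronglyMeasurable
    (.of_forall fun z => by rw [norm_smul, norm_weightedDerivs])

lemma map_eq_integral_of_iteratedLineDerivOp_eq [CompleteSpace F] (f : 𝓢(E, F) →L[𝕜] 𝕜)
    {K : Z → 𝕜} {Φ : Z → 𝓢(E, F)} {Θ : 𝓢(E, F)} (hK : Continuous K) (hΦ : Continuous Φ)
    (hint : ∀ N, Integrable (fun z => ‖K z‖ * schwartzNorm 𝕜 N (Φ z)) μ)
    (hΘ : ∀ (l : ℕ) (m : Fin l → E) (x : E), ∂^{m} Θ x = ∫ z, K z • ∂^{m} (Φ z) x ∂μ) :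
    f Θ = ∫ z, K z • f (Φ z) ∂μ := by
  obtain ⟨N, L, hL⟩ := exists_eq_comp_weightedDerivs f
  have hi := integrable_smul_weightedDerivs hK hΦ (hint N)
  have hintegral : weightedDerivs 𝕜 N Θ = ∫ z, K z • weightedDerivs 𝕜 N (Φ z) ∂μ := by
    refine funext fun i => BoundedContinuousFunction.ext fun x =>
      ContinuousMultilinearMap.ext fun m => ?_
    let eval : WeightedDerivSpace E F N →L[ℝ] F :=
      (ContinuousMultilinearMap.apply ℝ (fun _ : Fin i.1.2 => E) F m).comp
        ((BoundedContinuousFunction.evalCLM ℝ x).comp (ContinuousLinearMap.proj (R := ℝ)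
          (φ := fun i : Finset.Iic (N, N) => E →ᵇ E [×i.1.2]→L[ℝ] F) i))
    have heval (φ : 𝓢(E, F)) : eval (weightedDerivs 𝕜 N φ) = ‖x‖ ^ i.1.1 • ∂^{m} φ x := by
      rw [SchwartzMap.iteratedLineDerivOp_eq_iteratedFDeriv]; rfl
    have hsmul (z : Z) : eval (K z • weightedDerivs 𝕜 N (Φ z)) =
        K z • eval (weightedDerivs 𝕜 N (Φ z)) := rfl
    change eval (weightedDerivs 𝕜 N Θ) = eval (∫ z, K z • weightedDerivs 𝕜 N (Φ z) ∂μ)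
    rw [← eval.integral_comp_comm hi, heval, hΘ, ← integral_smul]
    simp only [hsmul, heval, smul_comm (‖x‖ ^ i.1.1) (K _)]
  rw [hL, hintegral, ← L.integral_comp_comm hi]
  simp only [map_smul, hL]

end SchwartzIntegral

/-! ### Convolution with Fourier transforms of products -/

section Product

variable {E : Type*} [NormedAddCommGroup E] [NormedSpace ℝ E]

/-- Pointwise product of Schwartz functions. -/
abbrev schwartzMul (κ ψ : 𝓢(E, ℂ)) : 𝓢(E, ℂ) :=
  SchwartzMap.pairing (ContinuousLinearMap.mul ℂ ℂ) κ ψ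

lemma schwartzMul_apply (κ ψ : 𝓢(E, ℂ)) (x : E) : schwartzMul κ ψ x = κ x * ψ x :=
  rfl

lemma iteratedLineDerivOp_compSubConstCLM {l : ℕ} (m : Fin l → E) (φ : 𝓢(E, ℂ)) (y x : E) :
    ∂^{m} (φ.compSubConstCLM ℂ y) x = ∂^{m} φ (x - y) := by
  simp only [SchwartzMap.iteratedLineDerivOp_eq_iteratedFDeriv, iteratedFDeriv_compSubConstCLM]

end Product

section Convolution

variable {E : Type*} [NormedAddCommGroup E] [InnerProductSpace ℝ E] [FiniteDimensional ℝ E]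
  [MeasurableSpace E] [BorelSpace E]

lemma fourierInv_schwartzMul_apply (κ ψ : 𝓢(E, ℂ)) (x : E) :
    𝓕⁻ (schwartzMul κ ψ) x = ∫ w, 𝓕 κ w * 𝓕⁻ ψ (x + w) := by
  have hconv : schwartzMul κ ψ =
      𝓕 (SchwartzMap.convolution (ContinuousLinearMap.mul ℂ ℂ) (𝓕⁻ κ) (𝓕⁻ ψ)) := by
    rw [SchwartzMap.fourier_convolution, fourier_fourierInv_eq, fourier_fourierInv_eq]
  rw [hconv, fourierInv_fourier_eq, SchwartzMap.convolution_apply, convolution,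
    ← integral_neg_eq_self]
  refine integral_congr_ae (.of_forall fun w => ?_)
  have hκ : (𝓕⁻ κ) (-w) = (𝓕 κ) w := congrArg (𝓕 κ : 𝓢(E, ℂ)) (neg_neg w)
  simp only [ContinuousLinearMap.mul_apply', hκ, sub_neg_eq_add]

lemma exists_iteratedLineDerivOp_fourierInv_schwartzMul {l : ℕ} (m : Fin l → E) (ψ : 𝓢(E, ℂ)) :
    ∃ ψ' : 𝓢(E, ℂ), ∂^{m} (𝓕⁻ ψ) = 𝓕⁻ ψ' ∧
      ∀ κ, ∂^{m} (𝓕⁻ (schwartzMul κ ψ)) = 𝓕⁻ (schwartzMul κ ψ') := by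
  induction l with
  | zero => exact ⟨ψ, by simp, by simp⟩
  | succ l ih =>
    obtain ⟨ψ', hψ', hmul⟩ := ih (Fin.tail m)
    have hg : (inner ℝ · (m 0) : E → ℝ).HasTemperateGrowth := by fun_prop
    refine ⟨(2 * π * Complex.I) • SchwartzMap.smulLeftCLM ℂ (inner ℝ · (m 0)) ψ', ?_,
      fun κ => ?_⟩
    · rw [iteratedLineDerivOp_succ_left, hψ', SchwartzMap.lineDerivOp_fourierInv_eq]
    · rw [iteratedLineDerivOp_succ_left, hmul, SchwartzMap.lineDerivOp_fourierInv_eq]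
      congr 1
      ext x
      simp only [schwartzMul_apply, FunLike.coe_smul, Pi.smul_apply,
        SchwartzMap.smulLeftCLM_apply_apply hg, smul_eq_mul, Complex.real_smul]
      ring

lemma integrable_one_add_norm_pow_mul_norm (φ : 𝓢(E, ℂ)) (N : ℕ) :
    Integrable fun x => (1 + ‖x‖) ^ N * ‖φ x‖ := by
  simp only [add_comm (1 : ℝ), add_pow, one_pow, mul_one, Finset.sum_mul]
  refine integrable_finsetSum _ fun i _ => ?_
  simpa only [mul_right_comm] using (φ.integrable_pow_mul volume i).mul_const _

lemma map_compSubConstCLM_fourierInv_schwartzMul (f : 𝓢(E, ℂ) →L[ℂ] ℂ) (κ ψ : 𝓢(E, ℂ)) (y : E) :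
    f ((𝓕⁻ (schwartzMul κ ψ)).compSubConstCLM ℂ y) =
      ∫ w, 𝓕 κ w * f ((𝓕⁻ ψ).compSubConstCLM ℂ (y - w)) := by
  have hcont : Continuous fun w => (𝓕⁻ ψ).compSubConstCLM ℂ (y - w) :=
    (continuous_compSubConstCLM (𝓕⁻ ψ)).comp (continuous_const.sub continuous_id)
  refine map_eq_integral_of_iteratedLineDerivOp_eq f (𝓕 κ).continuous hcont (fun N => ?_)
    fun l m x => ?_
  · have hle (w : E) : schwartzNorm ℂ N ((𝓕⁻ ψ).compSubConstCLM ℂ (y - w)) ≤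
        2 ^ N * ((1 + ‖y‖) ^ N * (1 + ‖w‖) ^ N) * schwartzNorm ℂ N (𝓕⁻ ψ) := by
      refine (schwartzNorm_compSubConstCLM_le N (y - w) (𝓕⁻ ψ)).trans ?_
      rw [← mul_pow (1 + ‖y‖), mul_comm (1 + ‖y‖)]
      gcongr
      simpa using one_add_norm_le_mul (y - w) (-w)
    refine ((integrable_one_add_norm_pow_mul_norm (𝓕 κ) N).const_mul
      (2 ^ N * (1 + ‖y‖) ^ N * schwartzNorm ℂ N (𝓕⁻ ψ))).mono'
      ((𝓕 κ).continuous.norm.mul ((continuous_schwartzNorm N).comp hcont)).aestronglyMeasurable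
      (.of_forall fun w => ?_)
    rw [norm_mul, norm_norm, Real.norm_of_nonneg (apply_nonneg _ _)]
    calc ‖𝓕 κ w‖ * schwartzNorm ℂ N ((𝓕⁻ ψ).compSubConstCLM ℂ (y - w))
        ≤ ‖𝓕 κ w‖ * (2 ^ N * ((1 + ‖y‖) ^ N * (1 + ‖w‖) ^ N) * schwartzNorm ℂ N (𝓕⁻ ψ)) := by
          gcongr
          exact hle w
      _ = 2 ^ N * (1 + ‖y‖) ^ N * schwartzNorm ℂ N (𝓕⁻ ψ) * ((1 + ‖w‖) ^ N * ‖𝓕 κ w‖) := by ring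
  · obtain ⟨ψ', hψ', hmul⟩ := exists_iteratedLineDerivOp_fourierInv_schwartzMul m ψ
    simp only [iteratedLineDerivOp_compSubConstCLM, hψ', hmul, fourierInv_schwartzMul_apply,
      smul_eq_mul, sub_sub_eq_add_sub, add_sub_right_comm]

end Convolution

lemma distConv_fourier (ψ : 𝓢(Rn n, ℂ)) (f : TemperedDist n) (y : Rn n) :
    distConv (𝓕 ψ) f y = f ((𝓕⁻ ψ).compSubConstCLM ℂ y) := by
  refine congrArg f (SchwartzMap.ext fun z => ?_)
  exact congrArg (𝓕 ψ : 𝓢(Rn n, ℂ)) (neg_sub z y).symm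

lemma continuous_distConv_fourier (ψ : 𝓢(Rn n, ℂ)) (f : TemperedDist n) :
    Continuous (distConv (𝓕 ψ) f) := by
  rw [funext (distConv_fourier ψ f)]
  exact f.continuous.comp (continuous_compSubConstCLM (𝓕⁻ ψ))

lemma distConv_fourier_schwartzMul (κ ψ : 𝓢(Rn n, ℂ)) (f : TemperedDist n) (y : Rn n) :
    distConv (𝓕 (schwartzMul κ ψ)) f y = ∫ w, 𝓕 κ w * distConv (𝓕 ψ) f (y - w) := by
  simp only [distConv_fourier]
  exact map_compSubConstCLM_fourierInv_schwartzMul f κ ψ y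

/-! ### Multipliers vanishing near the origin -/

section Multiplier

variable {𝕜 E F : Type*} [RCLike 𝕜] [NormedAddCommGroup E] [NormedSpace ℝ E]
  [NormedAddCommGroup F] [NormedSpace ℝ F] [NormedSpace 𝕜 F] [IsScalarTower ℝ 𝕜 F]
  [SMulCommClass ℝ 𝕜 F]

lemma pow_mul_norm_iteratedFDeriv_smul_le {u : E → 𝕜} (hu : ContDiff ℝ ∞ u) {k l N : ℕ}
    (hk : k ≤ N) (hl : l ≤ N) {x : E} {B : ℝ} (hB : ∀ i ≤ l, ‖iteratedFDeriv ℝ i u x‖ ≤ B)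
    (θ : 𝓢(E, F)) :
    ‖x‖ ^ k * ‖iteratedFDeriv ℝ l (fun x => u x • θ x) x‖ ≤ 2 ^ l * B * schwartzNorm 𝕜 N θ := by
  have hB0 : 0 ≤ B := (norm_nonneg _).trans (hB 0 l.zero_le)
  calc ‖x‖ ^ k * ‖iteratedFDeriv ℝ l (fun x => u x • θ x) x‖
      ≤ ‖x‖ ^ k * ∑ i ∈ Finset.range (l + 1), (l.choose i : ℝ) * ‖iteratedFDeriv ℝ i u x‖ *
          ‖iteratedFDeriv ℝ (l - i) θ x‖ := by
        gcongr
        exact norm_iteratedFDeriv_smul_le hu (θ.smooth _) x (mod_cast le_top)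
    _ ≤ ‖x‖ ^ k * ∑ i ∈ Finset.range (l + 1), (l.choose i : ℝ) * B *
          ‖iteratedFDeriv ℝ (l - i) θ x‖ := by
        gcongr with i hi
        exact hB i (Finset.mem_range_succ_iff.1 hi)
    _ = ∑ i ∈ Finset.range (l + 1), (l.choose i : ℝ) * B *
          (‖x‖ ^ k * ‖iteratedFDeriv ℝ (l - i) θ x‖) := by
        rw [Finset.mul_sum]
        exact Finset.sum_congr rfl fun i _ => by ring
    _ ≤ ∑ i ∈ Finset.range (l + 1), (l.choose i : ℝ) * B * schwartzNorm 𝕜 N θ := by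
        gcongr with i
        exact pow_mul_norm_iteratedFDeriv_le_schwartzNorm hk (by lia) θ x
    _ = 2 ^ l * B * schwartzNorm 𝕜 N θ := by
        simp only [← Finset.sum_mul, ← Nat.cast_sum, Nat.sum_range_choose, Nat.cast_pow,
          Nat.cast_ofNat]

lemma norm_iteratedFDeriv_comp_smul_le {m : E → F} (hm : ContDiff ℝ ∞ m) {i : ℕ} {B : ℝ}
    (hB : ∀ x, ‖iteratedFDeriv ℝ i m x‖ ≤ B) {s : ℝ} (hs : s ∈ Set.Icc 0 1) (x : E) :
    ‖iteratedFDeriv ℝ i (fun x => m (s • x)) x‖ ≤ B := by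
  rw [iteratedFDeriv_comp_const_smul s (hm.of_le (mod_cast le_top)), norm_smul, norm_pow,
    Real.norm_of_nonneg hs.1]
  exact (mul_le_of_le_one_left (norm_nonneg _) (pow_le_one₀ hs.1 hs.2)).trans (hB _)

lemma exists_schwartzNorm_le_of_eq_zero_ball {m : E → 𝕜} (hm : ContDiff ℝ ∞ m) {N : ℕ} {B : ℝ}
    (hB : ∀ i ≤ N, ∀ x, ‖iteratedFDeriv ℝ i m x‖ ≤ B) {r : ℝ} (hr : 0 < r)
    (hm0 : ∀ x, ‖x‖ < r → m x = 0) (θ : 𝓢(E, F)) (M : ℕ) :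
    ∃ C, ∀ s ∈ Set.Icc (0 : ℝ) 1, ∀ g : 𝓢(E, F), (∀ x, g x = m (s • x) • θ x) →
      schwartzNorm 𝕜 N g ≤ C * s ^ M := by
  have hB0 : 0 ≤ B := (norm_nonneg _).trans (hB 0 N.zero_le 0)
  refine ⟨r⁻¹ ^ M * (2 ^ N * B * schwartzNorm 𝕜 (N + M) θ), fun s hs g hg => ?_⟩
  have hs0 := hs.1
  refine schwartzNorm_le_of_forall (by positivity) fun k hk l hl x => ?_
  rcases lt_or_ge ‖s • x‖ r with hx | hx
  · have hev : ⇑g =ᶠ[𝓝 x] fun _ => 0 := by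
      filter_upwards [(continuous_const_smul s).norm.continuousAt.eventually_lt
        continuousAt_const hx] with z hz
      rw [hg, hm0 _ hz, zero_smul]
    rw [(hev.iteratedFDeriv ℝ l).eq_of_nhds, iteratedFDeriv_fun_zero]
    simpa using by positivity
  · have hone : 1 ≤ (r⁻¹ * (s * ‖x‖)) ^ M := by
      rw [norm_smul, Real.norm_of_nonneg hs0] at hx
      exact one_le_pow₀ (by rwa [← div_eq_inv_mul, one_le_div₀ hr])
    have hsmul : ContDiff ℝ ∞ fun x => m (s • x) := hm.comp (contDiff_const_smul s)
    calc ‖x‖ ^ k * ‖iteratedFDeriv ℝ l g x‖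
        ≤ (r⁻¹ * (s * ‖x‖)) ^ M * (‖x‖ ^ k * ‖iteratedFDeriv ℝ l g x‖) :=
          le_mul_of_one_le_left (by positivity) hone
      _ = r⁻¹ ^ M * (‖x‖ ^ (k + M) * ‖iteratedFDeriv ℝ l (fun x => m (s • x) • θ x) x‖) *
            s ^ M := by
          rw [show ⇑g = fun x => m (s • x) • θ x from funext hg]; ring
      _ ≤ r⁻¹ ^ M * (2 ^ l * B * schwartzNorm 𝕜 (N + M) θ) * s ^ M := by
          gcongr r⁻¹ ^ M * ?_ * s ^ M
          exact pow_mul_norm_iteratedFDeriv_smul_le hsmul (Nat.add_le_add_right hk M)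
            (hl.trans (Nat.le_add_right N M))
            (fun i hi => norm_iteratedFDeriv_comp_smul_le hm (hB i (hi.trans hl)) hs x) θ
      _ ≤ r⁻¹ ^ M * (2 ^ N * B * schwartzNorm 𝕜 (N + M) θ) * s ^ M := by
          gcongr
          exact one_le_two

end Multiplier

/-! ### Dilations -/

section Dilation

variable {E : Type*} [NormedAddCommGroup E] [NormedSpace ℝ E]

/-- The dyadic dilation `φ ↦ φ (2 ^ j ·)` on the Schwartz space. -/
def dilate (j : ℤ) : 𝓢(E, ℂ) →L[ℂ] 𝓢(E, ℂ) :=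
  SchwartzMap.compCLMOfContinuousLinearEquiv ℂ
    (ContinuousLinearEquiv.smulLeft (Units.mk0 ((2 : ℝ) ^ j) (by positivity)))

lemma dilate_apply (j : ℤ) (φ : 𝓢(E, ℂ)) (x : E) : dilate j φ x = φ ((2 : ℝ) ^ j • x) :=
  rfl

lemma dilate_dilate (i j : ℤ) (φ : 𝓢(E, ℂ)) : dilate i (dilate j φ) = dilate (i + j) φ := by
  ext x
  rw [dilate_apply, dilate_apply, dilate_apply, smul_smul, ← zpow_add₀ two_ne_zero, add_comm]

lemma schwartzNorm_dilate_neg_le (N j : ℕ) (φ : 𝓢(E, ℂ)) :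
    schwartzNorm ℂ N (dilate (-j) φ) ≤ 2 ^ (j * N) * schwartzNorm ℂ N φ := by
  have hs : ((2 : ℝ) ^ j)⁻¹ ∈ Set.Icc (0 : ℝ) 1 :=
    ⟨by positivity, inv_le_one_of_one_le₀ (one_le_pow₀ one_le_two)⟩
  refine schwartzNorm_le_of_forall (by positivity) fun k hk l hl x => ?_
  have hφ : ⇑(dilate (-j) φ) = fun x => φ (((2 : ℝ) ^ j)⁻¹ • x) :=
    funext fun x => by rw [dilate_apply, zpow_neg, zpow_natCast]
  have hx : ‖x‖ = 2 ^ j * ‖((2 : ℝ) ^ j)⁻¹ • x‖ := by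
    rw [norm_smul, Real.norm_of_nonneg hs.1, mul_inv_cancel_left₀ (by positivity)]
  rw [hφ, iteratedFDeriv_comp_const_smul _ (φ.smooth _), norm_smul, norm_pow,
    Real.norm_of_nonneg hs.1]
  set y := ((2 : ℝ) ^ j)⁻¹ • x
  calc ‖x‖ ^ k * ((((2 : ℝ) ^ j)⁻¹) ^ l * ‖iteratedFDeriv ℝ l φ y‖)
      ≤ ‖x‖ ^ k * (1 * ‖iteratedFDeriv ℝ l φ y‖) := by
        gcongr
        exact pow_le_one₀ hs.1 hs.2
    _ = (2 ^ j) ^ k * (‖y‖ ^ k * ‖iteratedFDeriv ℝ l φ y‖) := by rw [hx]; ring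
    _ ≤ (2 ^ j) ^ N * schwartzNorm ℂ N φ := by
        gcongr
        · exact one_le_pow₀ one_le_two
        · exact pow_mul_norm_iteratedFDeriv_le_schwartzNorm hk hl φ y
    _ = 2 ^ (j * N) * schwartzNorm ℂ N φ := by rw [pow_mul]

lemma tendsto_schwartzMul_dilate {χ : 𝓢(E, ℂ)} {r : ℝ} (hr : 0 < r)
    (hχ : ∀ x, ‖x‖ < r → χ x = 1) (θ : 𝓢(E, ℂ)) :
    Tendsto (fun J : ℕ => schwartzMul (dilate (-J) χ) θ) atTop (𝓝 θ) := by
  have hB (N : ℕ) : ∀ i ≤ N, ∀ x,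
      ‖iteratedFDeriv ℝ i (fun x => χ x - 1) x‖ ≤ schwartzNorm ℂ N χ + 1 := by
    intro i hi x
    have hχi : ‖iteratedFDeriv ℝ i χ x‖ ≤ schwartzNorm ℂ N χ := by
      simpa using pow_mul_norm_iteratedFDeriv_le_schwartzNorm (𝕜 := ℂ) N.zero_le hi χ x
    refine (congrArg norm (iteratedFDeriv_sub_apply (χ.smooth _).contDiffAt
      contDiffAt_const)).trans_le ((norm_sub_le _ _).trans (add_le_add hχi ?_))
    rcases Nat.eq_zero_or_pos i with rfl | hi
    · simp
    · simp [iteratedFDeriv_const_of_ne hi.ne']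
  refine tendsto_of_tendsto_schwartzNorm (𝕜 := ℂ) fun N => ?_
  obtain ⟨C, hC⟩ := exists_schwartzNorm_le_of_eq_zero_ball ((χ.smooth _).sub contDiff_const)
    (hB N) hr (fun x hx => sub_eq_zero.2 (hχ x hx)) θ 1
  have hlim : Tendsto (fun J : ℕ => C * ((2 : ℝ)⁻¹ ^ J) ^ 1) atTop (𝓝 0) := by
    simpa using (tendsto_pow_atTop_nhds_zero_of_lt_one (r := (2 : ℝ)⁻¹) (by norm_num)
      (by norm_num)).const_mul C
  refine squeeze_zero (fun J => apply_nonneg _ _) (fun J => hC ((2 : ℝ)⁻¹ ^ J)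
    ⟨by positivity, pow_le_one₀ (by norm_num) (by norm_num)⟩ _ fun x => ?_) hlim
  rw [_root_.sub_apply, schwartzMul_apply, dilate_apply, zpow_neg, zpow_natCast, inv_pow,
    smul_eq_mul]
  ring

end Dilation

/-! ### Cut-off functions -/

section Cutoff

variable {E : Type*} [NormedAddCommGroup E] [NormedSpace ℝ E]

lemma contDiff_div_of_ne_zero_on_tsupport {g ψ : E → ℂ} {m : ℕ∞ω} (hg : ContDiff ℝ m g)
    (hψ : ContDiff ℝ m ψ) (h : ∀ x ∈ tsupport g, ψ x ≠ 0) :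
    ContDiff ℝ m fun x => g x / ψ x := by
  simp only [div_eq_mul_inv]
  refine contMDiff_iff_contDiff.1 (contMDiff_of_tsupport fun x hx => ContDiffAt.contMDiffAt ?_)
  exact hg.contDiffAt.mul (hψ.contDiffAt.inv (h x (tsupport_mul_subset_left hx)))

lemma exists_schwartzMul_eq_of_ne_zero_on_tsupport {g ψ : 𝓢(E, ℂ)} (hg : HasCompactSupport g)
    (hψ : ∀ x ∈ tsupport g, ψ x ≠ 0) :
    ∃ lam : 𝓢(E, ℂ), (∀ x, g x = 0 → lam x = 0) ∧ schwartzMul lam ψ = g := by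
  have hdiv : HasCompactSupport fun x => g x / ψ x := hg.mono fun x hx h => hx (by simp [h])
  refine ⟨hdiv.toSchwartzMap (contDiff_div_of_ne_zero_on_tsupport (g.smooth _) (ψ.smooth _) hψ),
    fun x hx => div_eq_zero_iff.2 (.inl hx), SchwartzMap.ext fun x => ?_⟩
  by_cases hx : x ∈ tsupport g
  · exact div_mul_cancel₀ _ (hψ x hx)
  · have hgx : g x = 0 := image_eq_zero_of_notMem_tsupport hx
    exact (by simp [hgx] : g x / ψ x * ψ x = g x)

variable [FiniteDimensional ℝ E]

lemma exists_schwartz_cutoff {r R : ℝ} (hr : 0 < r) (hrR : r < R) :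
    ∃ χ : 𝓢(E, ℂ), (∀ x, ‖x‖ ≤ r → χ x = 1) ∧ ∀ x, R ≤ ‖x‖ → χ x = 0 := by
  let b : ContDiffBump (0 : E) := ⟨r, R, hr, hrR⟩
  have hsupp : HasCompactSupport fun x => (b x : ℂ) :=
    b.hasCompactSupport.comp_left Complex.ofReal_zero
  refine ⟨hsupp.toSchwartzMap (Complex.ofRealCLM.contDiff.comp b.contDiff), fun x hx => ?_,
    fun x hx => ?_⟩
  · exact congrArg Complex.ofReal (b.one_of_mem_closedBall (by simpa [b] using hx))
  · exact congrArg Complex.ofReal (b.zero_of_le_dist (by simpa [b] using hx))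

lemma exists_schwartzMul_eq_dilate_sub {ε k : ℝ} (hε : 0 < ε) (hk : 1 < k) {ψ : 𝓢(E, ℂ)}
    (hψ : ∀ x, ε ≤ ‖x‖ → ‖x‖ ≤ 2 * k * ε → ψ x ≠ 0) :
    ∃ χ lam : 𝓢(E, ℂ), (∀ x, ‖x‖ < ε → χ x = 1) ∧ (∀ x, ‖x‖ < ε → lam x = 0) ∧
      schwartzMul lam ψ = dilate (-1) χ - χ := by
  obtain ⟨χ, hχ1, hχ0⟩ := exists_schwartz_cutoff (E := E) hε (lt_mul_of_one_lt_left hε hk)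
  set g := dilate (-1) χ - χ
  have hg (x : E) : g x = χ ((2 : ℝ)⁻¹ • x) - χ x := by
    rw [_root_.sub_apply, dilate_apply, zpow_neg_one]
  have hhalf (x : E) : ‖(2 : ℝ)⁻¹ • x‖ = ‖x‖ / 2 := by
    rw [norm_smul, norm_inv, Real.norm_two, inv_mul_eq_div]
  have hg_ball (x : E) (hx : ‖x‖ < ε) : g x = 0 := by
    rw [hg, hχ1 x hx.le, hχ1 _ (by rw [hhalf]; linarith [norm_nonneg x]), sub_self]
  have hg_far (x : E) (hx : 2 * k * ε < ‖x‖) : g x = 0 := by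
    have hkε : 0 < k * ε := by positivity
    rw [hg, hχ0 x (by linarith), hχ0 _ (by rw [hhalf]; linarith), sub_self]
  have hsupp : tsupport g ⊆ {x | ε ≤ ‖x‖ ∧ ‖x‖ ≤ 2 * k * ε} := by
    refine closure_minimal (fun x hx => ⟨?_, ?_⟩) ((isClosed_le continuous_const
      continuous_norm).inter (isClosed_le continuous_norm continuous_const))
    · exact not_lt.1 fun h => hx (hg_ball x h)
    · exact not_lt.1 fun h => hx (hg_far x h)
  have hg_compact : HasCompactSupport g :=
    (isCompact_closedBall (0 : E) (2 * k * ε)).of_isClosed_subset (isClosed_tsupport _)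
      fun x hx => by simpa using (hsupp hx).2
  obtain ⟨lam, hlam, heq⟩ := exists_schwartzMul_eq_of_ne_zero_on_tsupport hg_compact
    fun x hx => hψ x (hsupp hx).1 (hsupp hx).2
  exact ⟨χ, lam, fun x hx => hχ1 x hx.le, fun x hx => hlam x (hg_ball x hx), heq⟩

end Cutoff

/-! ### The Calderón reproducing formula -/

section Calderon

section NormedSpace

variable {E : Type*} [NormedAddCommGroup E] [NormedSpace ℝ E]

/-- The factors `K_j` of the Calderón reproducing formula `θ = ∑ K_j ψ_j`, where `ψ_0 = θ` and
`ψ_{j+1} = ψ_1 (2 ^ (-j) ·)`. It is used for a cut-off function `χ` at the origin and for `lam`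
with `lam ψ_1 = χ (· / 2) - χ`, which makes the sum telescope. -/
def calderonKernel (χ lam θ : 𝓢(E, ℂ)) : ℕ → 𝓢(E, ℂ)
  | 0 => χ
  | j + 1 => schwartzMul (dilate (-j) lam) θ

lemma sum_calderonKernel_succ {χ lam φ : 𝓢(E, ℂ)} (h : schwartzMul lam φ = dilate (-1) χ - χ)
    (θ : 𝓢(E, ℂ)) (J : ℕ) :
    ∑ j ∈ Finset.range J, schwartzMul (calderonKernel χ lam θ (j + 1)) (dilate (-j) φ) =
      schwartzMul (dilate (-J) χ) θ - schwartzMul χ θ := by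
  induction J with
  | zero =>
    ext x
    simp [dilate_apply]
  | succ J ih =>
    have hsucc : dilate (-(J + 1 : ℕ)) χ = dilate (-J) (schwartzMul lam φ + χ) := by
      rw [h, sub_add_cancel, dilate_dilate, Nat.cast_succ, neg_add]
    rw [Finset.sum_range_succ, ih, hsucc]
    ext x
    simp only [calderonKernel, schwartzMul_apply, dilate_apply, add_apply, _root_.sub_apply]
    ring

variable {ψ : ℕ → 𝓢(E, ℂ)}

lemma dilate_add_succ (hψ : ∀ j : ℕ, ψ (j + 1) = dilate (-j) (ψ 1)) (ν j : ℕ) :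
    dilate ν (ψ (j + 1 + ν)) = dilate (-j) (ψ 1) := by
  rw [add_right_comm, hψ, dilate_dilate, Nat.cast_add, neg_add, add_neg_cancel_comm_assoc]

lemma tendsto_sum_calderonKernel (hψ : ∀ j : ℕ, ψ (j + 1) = dilate (-j) (ψ 1))
    {χ lam : 𝓢(E, ℂ)} {r : ℝ} (hr : 0 < r) (hχ : ∀ x, ‖x‖ < r → χ x = 1)
    (hlam : schwartzMul lam (ψ 1) = dilate (-1) χ - χ) (ν : ℕ) :
    Tendsto (fun J => ∑ j ∈ Finset.range J,
      schwartzMul (dilate (-ν) (calderonKernel χ lam (dilate ν (ψ ν)) j)) (ψ (j + ν)))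
      atTop (𝓝 (ψ ν)) := by
  set θ := dilate ν (ψ ν) with hθ
  have hinv (φ : 𝓢(E, ℂ)) : dilate (-ν) (dilate ν φ) = φ := by
    ext x
    rw [dilate_dilate, neg_add_cancel, dilate_apply, zpow_zero, one_smul]
  have hdil (j : ℕ) : schwartzMul (dilate (-ν) (calderonKernel χ lam θ j)) (ψ (j + ν)) =
      dilate (-ν) (schwartzMul (calderonKernel χ lam θ j) (dilate ν (ψ (j + ν)))) := by
    conv_lhs => rw [← hinv (ψ (j + ν))]
    rfl
  have hsum (J : ℕ) : ∑ j ∈ Finset.range (J + 1), schwartzMul (calderonKernel χ lam θ j)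
      (dilate ν (ψ (j + ν))) = schwartzMul (dilate (-J) χ) θ := by
    rw [Finset.sum_range_succ', zero_add, ← hθ, calderonKernel.eq_1]
    simp only [dilate_add_succ hψ]
    rw [sum_calderonKernel_succ hlam, sub_add_cancel]
  rw [← tendsto_add_atTop_iff_nat 1, ← hinv (ψ ν)]
  simp only [hdil, ← map_sum, hsum]
  exact ((dilate (-ν)).continuous.tendsto θ).comp (tendsto_schwartzMul_dilate hr hχ θ)

lemma exists_schwartzNorm_calderonKernel_le (χ θ : 𝓢(E, ℂ)) {lam : 𝓢(E, ℂ)} {r : ℝ} (hr : 0 < r)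
    (hlam : ∀ x, ‖x‖ < r → lam x = 0) (N M : ℕ) :
    ∃ C, 0 ≤ C ∧ ∀ j, schwartzNorm ℂ N (calderonKernel χ lam θ j) ≤ C * ((2 : ℝ)⁻¹ ^ j) ^ M := by
  have hB : ∀ i ≤ N, ∀ x, ‖iteratedFDeriv ℝ i lam x‖ ≤ schwartzNorm ℂ N lam := fun i hi x => by
    simpa using pow_mul_norm_iteratedFDeriv_le_schwartzNorm (𝕜 := ℂ) N.zero_le hi lam x
  obtain ⟨C, hC⟩ := exists_schwartzNorm_le_of_eq_zero_ball (lam.smooth _) hB hr hlam θ M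
  refine ⟨max (schwartzNorm ℂ N χ) (C * 2 ^ M), le_max_of_le_left (apply_nonneg _ _), fun j => ?_⟩
  cases j with
  | zero => simp [calderonKernel]
  | succ j =>
    have hs : (2 : ℝ)⁻¹ ^ j ∈ Set.Icc (0 : ℝ) 1 :=
      ⟨by positivity, pow_le_one₀ (by norm_num) (by norm_num)⟩
    calc schwartzNorm ℂ N (calderonKernel χ lam θ (j + 1))
        ≤ C * ((2 : ℝ)⁻¹ ^ j) ^ M := hC _ hs _ fun x => by
          rw [calderonKernel, schwartzMul_apply, dilate_apply, zpow_neg, zpow_natCast, inv_pow,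
            smul_eq_mul]
      _ = C * 2 ^ M * ((2 : ℝ)⁻¹ ^ (j + 1)) ^ M := by
          rw [mul_assoc, ← mul_pow, pow_succ', mul_inv_cancel_left₀ two_ne_zero]
      _ ≤ _ := by gcongr; exact le_max_right _ _

end NormedSpace

section InnerProductSpace

variable {E : Type*} [NormedAddCommGroup E] [InnerProductSpace ℝ E] [FiniteDimensional ℝ E]
  [MeasurableSpace E] [BorelSpace E]

lemma fourier_dilate_neg_apply (ν : ℕ) (κ : 𝓢(E, ℂ)) (x : E) :
    𝓕 (dilate (-ν) κ) x = (2 : ℝ) ^ (ν * Module.finrank ℝ E) • 𝓕 κ ((2 : ℝ) ^ ν • x) := by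
  rw [SchwartzMap.fourier_coe, SchwartzMap.fourier_coe, Real.fourier_eq, Real.fourier_eq]
  have h := Measure.integral_comp_smul (volume : Measure E)
    (fun u => Real.fourierChar (-inner ℝ u ((2 : ℝ) ^ ν • x)) • κ u) ((2 : ℝ) ^ (-ν : ℤ))
  have hinv : (2 : ℝ) ^ ν * (2 : ℝ) ^ (-ν : ℤ) = 1 := by
    rw [zpow_neg, zpow_natCast, mul_inv_cancel₀ (by positivity)]
  simp only [inner_smul_left, inner_smul_right, RCLike.conj_to_real, ← mul_assoc, hinv,
    one_mul] at h
  simp only [dilate_apply, h, inner_smul_right]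
  congr 1
  simp [pow_mul, abs_of_pos]

lemma exists_one_add_pow_mul_norm_fourier_le (L : ℕ) :
    ∃ N, ∃ C : ℝ≥0, ∀ (φ : 𝓢(E, ℂ)) (x : E),
      (1 + ‖x‖) ^ L * ‖𝓕 φ x‖ ≤ C * schwartzNorm ℂ N φ := by
  obtain ⟨N, C, hC⟩ := exists_schwartzNorm_map_le (fourierCLM ℂ 𝓢(E, ℂ)) L
  refine ⟨N, 2 ^ L * C, fun φ x => ?_⟩
  have h := one_add_pow_mul_norm_iteratedFDeriv_le_schwartzNorm (𝕜 := ℂ) le_rfl L.zero_le (𝓕 φ) x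
  rw [norm_iteratedFDeriv_zero] at h
  refine h.trans ?_
  push_cast
  rw [mul_assoc]
  gcongr
  exact hC φ

lemma exists_norm_fourier_calderonKernel_le (χ θ : 𝓢(E, ℂ)) {lam : 𝓢(E, ℂ)} {r : ℝ} (hr : 0 < r)
    (hlam : ∀ x, ‖x‖ < r → lam x = 0) (σ β : ℝ) :
    ∃ C, 0 ≤ C ∧ ∀ j x, ‖𝓕 (calderonKernel χ lam θ j) x‖ ≤
      C * ((2 : ℝ) ^ (-(σ * j)) * (1 + ‖x‖) ^ (-β)) := by
  obtain ⟨N, A, hA⟩ := exists_one_add_pow_mul_norm_fourier_le (E := E) ⌈β⌉₊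
  obtain ⟨C, hC0, hC⟩ := exists_schwartzNorm_calderonKernel_le χ θ hr hlam N ⌈σ⌉₊
  refine ⟨A * C, by positivity, fun j x => ?_⟩
  have hσ : ((2 : ℝ)⁻¹ ^ j) ^ ⌈σ⌉₊ ≤ 2 ^ (-(σ * j)) := by
    rw [← pow_mul, inv_pow, ← Real.rpow_natCast, ← Real.rpow_neg zero_le_two, Nat.cast_mul,
      mul_comm (j : ℝ)]
    gcongr
    · exact one_le_two
    · exact Nat.le_ceil σ
  have hβ : ((1 + ‖x‖) ^ ⌈β⌉₊)⁻¹ ≤ (1 + ‖x‖) ^ (-β) := by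
    rw [← Real.rpow_natCast, ← Real.rpow_neg (by positivity)]
    gcongr
    · simp
    · exact Nat.le_ceil β
  calc ‖𝓕 (calderonKernel χ lam θ j) x‖
      = ((1 + ‖x‖) ^ ⌈β⌉₊ * ‖𝓕 (calderonKernel χ lam θ j) x‖) * ((1 + ‖x‖) ^ ⌈β⌉₊)⁻¹ := by
        field_simp
    _ ≤ A * (C * ((2 : ℝ)⁻¹ ^ j) ^ ⌈σ⌉₊) * ((1 + ‖x‖) ^ ⌈β⌉₊)⁻¹ := by
        gcongr ?_ * _
        refine (hA _ x).trans ?_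
        gcongr
        exact hC j
    _ ≤ A * (C * 2 ^ (-(σ * j))) * (1 + ‖x‖) ^ (-β) := by gcongr
    _ = _ := by ring

lemma exists_norm_fourier_calderonKernel_dilate_le (χ : 𝓢(E, ℂ)) {lam : 𝓢(E, ℂ)}
    {ψ : ℕ → 𝓢(E, ℂ)} {r : ℝ} (hψ : ∀ j : ℕ, ψ (j + 1) = dilate (-j) (ψ 1))
    (hr : 0 < r) (hlam : ∀ x, ‖x‖ < r → lam x = 0) (σ β : ℝ) :
    ∃ C, 0 ≤ C ∧ ∀ (ν j : ℕ) x, ‖𝓕 (calderonKernel χ lam (dilate ν (ψ ν)) j) x‖ ≤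
      C * ((2 : ℝ) ^ (-(σ * j)) * (1 + ‖x‖) ^ (-β)) := by
  obtain ⟨C₀, hC₀_nonneg, hC₀⟩ :=
    exists_norm_fourier_calderonKernel_le χ (dilate 0 (ψ 0)) hr hlam σ β
  obtain ⟨C₁, -, hC₁⟩ := exists_norm_fourier_calderonKernel_le χ (dilate 1 (ψ 1)) hr hlam σ β
  refine ⟨max C₀ C₁, le_max_of_le_left hC₀_nonneg, fun ν j x => ?_⟩
  cases ν with
  | zero =>
    refine (hC₀ j x).trans ?_
    gcongr
    exact le_max_left _ _
  | succ ν =>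
    have hdil : dilate (ν + 1 : ℕ) (ψ (ν + 1)) = dilate 1 (ψ 1) := by
      rw [hψ, dilate_dilate, Nat.cast_succ, add_neg_cancel_comm]
    rw [hdil]
    refine (hC₁ j x).trans ?_
    gcongr
    exact le_max_right _ _

end InnerProductSpace

end Calderon

/-! ### Dyadic weights and weighted means -/

section DyadicWeight

variable {E : Type*} [SeminormedAddCommGroup E]

/-- The weight `2 ^ (-σ j) (1 + 2 ^ ν |x - y|) ^ (-β)`, comparing the point `y` at frequency
`2 ^ (j + ν)` with the point `x` at frequency `2 ^ ν`. -/
def dyadicWeight (σ β : ℝ) (j ν : ℕ) (x y : E) : ℝ≥0∞ :=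
  ENNReal.ofReal ((2 : ℝ) ^ (-(σ * j)) * (1 + 2 ^ ν * ‖x - y‖) ^ (-β))

lemma dyadicWeight_ne_top (σ β : ℝ) (j ν : ℕ) (x y : E) : dyadicWeight σ β j ν x y ≠ ⊤ :=
  ENNReal.ofReal_ne_top

lemma measurable_dyadicWeight [MeasurableSpace E] [OpensMeasurableSpace E] (σ β : ℝ) (j ν : ℕ)
    (x : E) : Measurable (dyadicWeight σ β j ν x) := by
  have hcont : Continuous fun y => ‖x - y‖ := by fun_prop
  have := hcont.measurable
  unfold dyadicWeight
  fun_prop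

lemma dyadicWeight_zero_self (σ β : ℝ) (ν : ℕ) (x : E) : dyadicWeight σ β 0 ν x x = 1 := by
  simp [dyadicWeight]

lemma dyadicWeight_rpow (σ β : ℝ) {t : ℝ} (ht : 0 ≤ t) (j ν : ℕ) (x y : E) :
    dyadicWeight σ β j ν x y ^ t = dyadicWeight (σ * t) (β * t) j ν x y := by
  rw [dyadicWeight, ENNReal.ofReal_rpow_of_nonneg (by positivity) ht,
    Real.mul_rpow (by positivity) (by positivity), ← Real.rpow_mul zero_le_two,
    ← Real.rpow_mul (by positivity), neg_mul, neg_mul, mul_right_comm, dyadicWeight]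

lemma dyadicWeight_anti {σ σ' β β' : ℝ} (hσ : σ ≤ σ') (hβ : β ≤ β') (j ν : ℕ) (x y : E) :
    dyadicWeight σ' β' j ν x y ≤ dyadicWeight σ β j ν x y := by
  have hbase : 1 ≤ 1 + 2 ^ ν * ‖x - y‖ := le_add_of_nonneg_right (by positivity)
  unfold dyadicWeight
  gcongr
  exact one_le_two

lemma one_add_two_pow_mul_norm_sub_le (j ν : ℕ) (x y z : E) :
    1 + 2 ^ ν * ‖x - z‖ ≤ (1 + 2 ^ ν * ‖x - y‖) * (1 + 2 ^ (j + ν) * ‖y - z‖) := by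
  have hpow : (2 : ℝ) ^ ν ≤ 2 ^ (j + ν) := pow_le_pow_right₀ one_le_two (Nat.le_add_left ν j)
  calc 1 + 2 ^ ν * ‖x - z‖ ≤ 1 + 2 ^ ν * (‖x - y‖ + ‖y - z‖) := by
        gcongr
        exact norm_sub_le_norm_sub_add_norm_sub x y z
    _ ≤ 1 + (2 ^ ν * ‖x - y‖ + 2 ^ (j + ν) * ‖y - z‖) := by rw [mul_add]; gcongr
    _ ≤ 1 + (2 ^ ν * ‖x - y‖ + 2 ^ (j + ν) * ‖y - z‖) +
          2 ^ ν * ‖x - y‖ * (2 ^ (j + ν) * ‖y - z‖) := le_add_of_nonneg_right (by positivity)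
    _ = _ := by ring

lemma dyadicWeight_mul_le (σ : ℝ) {β : ℝ} (hβ : 0 ≤ β) (i j ν : ℕ) (x y z : E) :
    dyadicWeight σ β j ν x y * dyadicWeight σ β i (j + ν) y z ≤
      dyadicWeight σ β (i + j) ν x z := by
  rw [dyadicWeight, dyadicWeight, dyadicWeight, ← ENNReal.ofReal_mul (by positivity),
    mul_mul_mul_comm, ← Real.rpow_add two_pos, ← Real.mul_rpow (by positivity) (by positivity)]
  refine ENNReal.ofReal_le_ofReal (mul_le_mul (le_of_eq ?_) ?_ (by positivity) (by positivity))
  · congr 1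
    push_cast
    ring
  · exact Real.rpow_le_rpow_of_nonpos (by positivity)
      (one_add_two_pow_mul_norm_sub_le j ν x y z) (neg_nonpos.2 hβ)

/-- The supremum of a family `F` over all points and all frequencies above `2 ^ ν`, weighted
relative to the point `x` and the frequency `2 ^ ν`. -/
def maxSup (σ β : ℝ) (F : ℕ → E → ℝ≥0∞) (ν : ℕ) (x : E) : ℝ≥0∞ :=
  ⨆ (j : ℕ) (y : E), dyadicWeight σ β j ν x y * F (j + ν) y

variable {σ β : ℝ} {F : ℕ → E → ℝ≥0∞}

lemma dyadicWeight_mul_le_maxSup (j ν : ℕ) (x y : E) :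
    dyadicWeight σ β j ν x y * F (j + ν) y ≤ maxSup σ β F ν x :=
  le_iSup₂ (f := fun j y => dyadicWeight σ β j ν x y * F (j + ν) y) j y

lemma le_maxSup (ν : ℕ) (x : E) : F ν x ≤ maxSup σ β F ν x := by
  simpa [dyadicWeight_zero_self] using dyadicWeight_mul_le_maxSup (σ := σ) (β := β) (F := F) 0 ν x x

lemma maxSup_rpow {t : ℝ} (ht : 0 < t) (ν : ℕ) (x : E) :
    maxSup σ β F ν x ^ t = maxSup (σ * t) (β * t) (fun m z => F m z ^ t) ν x := by
  simp_rw [maxSup, ← ENNReal.orderIsoRpow_apply t ht, OrderIso.map_iSup, ENNReal.orderIsoRpow_apply,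
    ENNReal.mul_rpow_of_nonneg _ _ ht.le, dyadicWeight_rpow σ β ht.le]

lemma dyadicWeight_one_one_mul_le (j ν : ℕ) (x y : E) :
    dyadicWeight 1 1 j ν x y * ENNReal.ofReal (2 ^ (j + ν) * (1 + ‖y‖)) ≤
      ENNReal.ofReal (2 ^ ν * (1 + ‖x‖)) := by
  rw [dyadicWeight, ← ENNReal.ofReal_mul (by positivity), Real.rpow_neg_one, one_mul,
    Real.rpow_neg zero_le_two, Real.rpow_natCast]
  have hy : 1 + ‖y‖ ≤ (1 + ‖x‖) * (1 + 2 ^ ν * ‖x - y‖) := by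
    refine (one_add_norm_le_mul y x).trans ?_
    rw [norm_sub_rev]
    gcongr
    exact le_mul_of_one_le_left (norm_nonneg _) (one_le_pow₀ one_le_two)
  refine ENNReal.ofReal_le_ofReal ?_
  calc ((2 : ℝ) ^ j)⁻¹ * (1 + 2 ^ ν * ‖x - y‖)⁻¹ * (2 ^ (j + ν) * (1 + ‖y‖))
      ≤ ((2 : ℝ) ^ j)⁻¹ * (1 + 2 ^ ν * ‖x - y‖)⁻¹ *
          (2 ^ (j + ν) * ((1 + ‖x‖) * (1 + 2 ^ ν * ‖x - y‖))) := by gcongr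
    _ = 2 ^ ν * (1 + ‖x‖) := by rw [pow_add]; field_simp

lemma maxSup_ne_top {C : ℝ≥0∞} (hC : C ≠ ⊤) {p : ℝ} (hp : 0 ≤ p)
    (hF : ∀ m y, F m y ≤ C * ENNReal.ofReal (2 ^ m * (1 + ‖y‖)) ^ p) (hσ : p ≤ σ) (hβ : p ≤ β)
    (ν : ℕ) (x : E) : maxSup σ β F ν x ≠ ⊤ := by
  refine ne_top_of_le_ne_top (b := C * ENNReal.ofReal (2 ^ ν * (1 + ‖x‖)) ^ p)
    (ENNReal.mul_ne_top hC (ENNReal.rpow_ne_top_of_nonneg hp ENNReal.ofReal_ne_top))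
    (iSup₂_le fun j y => ?_)
  calc dyadicWeight σ β j ν x y * F (j + ν) y
      ≤ dyadicWeight p p j ν x y * (C * ENNReal.ofReal (2 ^ (j + ν) * (1 + ‖y‖)) ^ p) :=
        mul_le_mul' (dyadicWeight_anti hσ hβ j ν x y) (hF _ _)
    _ = C * (dyadicWeight 1 1 j ν x y * ENNReal.ofReal (2 ^ (j + ν) * (1 + ‖y‖))) ^ p := by
        rw [ENNReal.mul_rpow_of_nonneg _ _ hp, dyadicWeight_rpow _ _ hp, one_mul, mul_left_comm]
    _ ≤ C * ENNReal.ofReal (2 ^ ν * (1 + ‖x‖)) ^ p := by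
        gcongr
        exact dyadicWeight_one_one_mul_le j ν x y

end DyadicWeight

section MeanSum

variable {E : Type*} [NormedAddCommGroup E] [NormedSpace ℝ E] [MeasureSpace E]

/-- The sum over all frequencies above `2 ^ ν` of the integrals of a family `G`, weighted relative
to the point `x` and the frequency `2 ^ ν` and normalized by the volume of the frequency scale. -/
def meanSum (σ β : ℝ) (G : ℕ → E → ℝ≥0∞) (ν : ℕ) (x : E) : ℝ≥0∞ :=
  ∑' j : ℕ, 2 ^ ((j + ν) * Module.finrank ℝ E) * ∫⁻ z, dyadicWeight σ β j ν x z * G (j + ν) z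

lemma dyadicWeight_mul_meanSum_le (σ : ℝ) {β : ℝ} (hβ : 0 ≤ β) (G : ℕ → E → ℝ≥0∞) (j ν : ℕ)
    (x y : E) : dyadicWeight σ β j ν x y * meanSum σ β G (j + ν) y ≤ meanSum σ β G ν x := by
  rw [meanSum, ← ENNReal.tsum_mul_left]
  refine le_trans (ENNReal.tsum_le_tsum fun i => ?_) (ENNReal.tsum_comp_le_tsum_of_injective
    (add_left_injective j) fun i => 2 ^ ((i + ν) * Module.finrank ℝ E) *
      ∫⁻ z, dyadicWeight σ β i ν x z * G (i + ν) z)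
  rw [mul_left_comm, ← lintegral_const_mul' _ _ (dyadicWeight_ne_top _ _ _ _ _ _), ← add_assoc]
  refine mul_le_mul' le_rfl (lintegral_mono fun z => ?_)
  rw [← mul_assoc]
  gcongr
  exact dyadicWeight_mul_le σ hβ i j ν x y z

lemma meanSum_anti {σ σ' β β' : ℝ} (hσ : σ ≤ σ') (hβ : β ≤ β') (G : ℕ → E → ℝ≥0∞) (ν : ℕ)
    (x : E) : meanSum σ' β' G ν x ≤ meanSum σ β G ν x := by
  unfold meanSum
  gcongr
  exact dyadicWeight_anti hσ hβ _ _ _ _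

end MeanSum

/-! ### Integral mean estimates from reproducing inequalities -/

lemma rpow_lintegral_mul_le {α : Type*} [MeasurableSpace α] (μ : Measure α) {k g : α → ℝ≥0∞}
    (hk : Measurable k) (hg : Measurable g) {t : ℝ} (ht : 1 ≤ t) :
    (∫⁻ z, k z * g z ∂μ) ^ t ≤ (∫⁻ z, k z ∂μ) ^ (t - 1) * ∫⁻ z, k z * g z ^ t ∂μ := by
  have ht0 : 0 < t := by linarith
  have h1t : 0 ≤ 1 - t⁻¹ := sub_nonneg.2 (inv_le_one_of_one_le₀ ht)
  have htinv : 0 ≤ t⁻¹ := by positivity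
  have hsplit : ∀ z, k z ^ (1 - t⁻¹) * (k z * g z ^ t) ^ t⁻¹ = k z * g z := fun z => by
    rw [ENNReal.mul_rpow_of_nonneg _ _ htinv, ← mul_assoc,
      ← ENNReal.rpow_add_of_nonneg _ _ h1t htinv, ENNReal.rpow_rpow_inv ht0.ne', sub_add_cancel,
      ENNReal.rpow_one]
  have holder := ENNReal.lintegral_mul_norm_pow_le (μ := μ) hk.aemeasurable
    (hk.mul (hg.pow_const t)).aemeasurable h1t htinv (sub_add_cancel _ _)
  simp only [Pi.mul_apply, hsplit] at holder
  refine (ENNReal.rpow_le_rpow holder ht0.le).trans (le_of_eq ?_)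
  rw [ENNReal.mul_rpow_of_nonneg _ _ ht0.le, ENNReal.rpow_inv_rpow ht0.ne', ← ENNReal.rpow_mul,
    sub_mul, inv_mul_cancel₀ ht0.ne', one_mul]

lemma rpow_le_of_le_rpow_one_sub_mul {A B : ℝ≥0∞} {t : ℝ} (ht : 0 < t) (ht1 : t ≤ 1)
    (hA : A ≠ ⊤) (h : A ≤ A ^ (1 - t) * B) : A ^ t ≤ B := by
  rcases eq_or_ne A 0 with rfl | hA0
  · simp [ENNReal.zero_rpow_of_pos ht]
  · have h1t : 0 ≤ 1 - t := sub_nonneg.2 ht1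
    rw [← ENNReal.mul_le_mul_iff_right (a := A ^ (1 - t))
      (ENNReal.rpow_pos (pos_iff_ne_zero.2 hA0) hA).ne' (ENNReal.rpow_ne_top_of_nonneg h1t hA),
      ← ENNReal.rpow_add_of_nonneg _ _ h1t ht.le, sub_add_cancel, ENNReal.rpow_one]
    exact h

section IntegralMeans

variable {E : Type*} [NormedAddCommGroup E] [NormedSpace ℝ E] [MeasureSpace E]

lemma maxSup_le_of_forall {σ β : ℝ} (hβ : 0 ≤ β) {C : ℝ≥0∞} {F G : ℕ → E → ℝ≥0∞}
    (h : ∀ ν y, F ν y ≤ C * meanSum σ β G ν y) (ν : ℕ) (x : E) :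
    maxSup σ β F ν x ≤ C * meanSum σ β G ν x := by
  refine iSup₂_le fun j y => ?_
  calc dyadicWeight σ β j ν x y * F (j + ν) y
      ≤ dyadicWeight σ β j ν x y * (C * meanSum σ β G (j + ν) y) := by gcongr; exact h _ _
    _ = C * (dyadicWeight σ β j ν x y * meanSum σ β G (j + ν) y) := mul_left_comm _ _ _
    _ ≤ C * meanSum σ β G ν x := by gcongr; exact dyadicWeight_mul_meanSum_le σ hβ G j ν x y

variable [BorelSpace E] {F : ℕ → E → ℝ≥0∞}

lemma meanSum_le_maxSup_mul (σ β : ℝ) {t : ℝ} (ht : 0 < t) (ht1 : t ≤ 1)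
    (hF : ∀ m, Measurable (F m)) (ν : ℕ) (x : E) :
    meanSum σ β F ν x ≤ maxSup σ β F ν x ^ (1 - t) *
      meanSum (σ * t) (β * t) (fun m z => F m z ^ t) ν x := by
  have h1t : 0 ≤ 1 - t := sub_nonneg.2 ht1
  rw [meanSum, meanSum, ← ENNReal.tsum_mul_left]
  refine ENNReal.tsum_le_tsum fun j => ?_
  have hmeas : Measurable fun z => dyadicWeight (σ * t) (β * t) j ν x z * F (j + ν) z ^ t :=
    (measurable_dyadicWeight _ _ _ _ _).mul ((hF _).pow_const t)
  rw [mul_left_comm, ← lintegral_const_mul _ hmeas]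
  refine mul_le_mul' le_rfl (lintegral_mono fun z => ?_)
  rw [← dyadicWeight_rpow σ β ht.le, ← ENNReal.mul_rpow_of_nonneg _ _ ht.le]
  calc dyadicWeight σ β j ν x z * F (j + ν) z
      = (dyadicWeight σ β j ν x z * F (j + ν) z) ^ (1 - t) *
        (dyadicWeight σ β j ν x z * F (j + ν) z) ^ t := by
        rw [← ENNReal.rpow_add_of_nonneg _ _ h1t ht.le, sub_add_cancel, ENNReal.rpow_one]
    _ ≤ _ := by gcongr; exact dyadicWeight_mul_le_maxSup j ν x z

lemma maxSup_rpow_le_of_ne_top {σ β t : ℝ} (hβ : 0 ≤ β) (ht : 0 < t) (ht1 : t ≤ 1) {C : ℝ≥0∞}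
    (hF : ∀ m, Measurable (F m)) (hC : ∀ ν y, F ν y ≤ C * meanSum σ β F ν y) {ν : ℕ} {x : E}
    (hfin : maxSup σ β F ν x ≠ ⊤) :
    maxSup σ β F ν x ^ t ≤ C * meanSum (σ * t) (β * t) (fun m z => F m z ^ t) ν x := by
  refine rpow_le_of_le_rpow_one_sub_mul ht ht1 hfin ?_
  calc maxSup σ β F ν x ≤ C * meanSum σ β F ν x := maxSup_le_of_forall hβ hC ν x
    _ ≤ C * (maxSup σ β F ν x ^ (1 - t) *
          meanSum (σ * t) (β * t) (fun m z => F m z ^ t) ν x) := by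
        gcongr
        exact meanSum_le_maxSup_mul σ β ht ht1 hF ν x
    _ = _ := mul_left_comm _ _ _

lemma rpow_le_meanSum_of_le_one {σ β σ' β' t : ℝ} (hβ : 0 ≤ β) (hσ' : σ ≤ σ') (hβ' : β ≤ β')
    (ht : 0 < t) (ht1 : t ≤ 1) {C C' : ℝ≥0∞} (hC'top : C' ≠ ⊤) (hF : ∀ m, Measurable (F m))
    (hC : ∀ ν y, F ν y ≤ C * meanSum σ β F ν y) (hC' : ∀ ν y, F ν y ≤ C' * meanSum σ' β' F ν y)
    (hfin : ∀ ν y, maxSup σ' β' F ν y ≠ ⊤) (ν : ℕ) (x : E) :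
    F ν x ^ t ≤ C * meanSum (σ * t) (β * t) (fun m z => F m z ^ t) ν x := by
  set G : ℕ → E → ℝ≥0∞ := fun m z => F m z ^ t
  have hweak : ∀ ν y, F ν y ^ t ≤ C' * meanSum (σ * t) (β * t) G ν y := fun ν y =>
    calc F ν y ^ t ≤ maxSup σ' β' F ν y ^ t := by gcongr; exact le_maxSup ν y
      _ ≤ C' * meanSum (σ' * t) (β' * t) G ν y :=
        maxSup_rpow_le_of_ne_top (hβ.trans hβ') ht ht1 hF hC' (hfin ν y)
      _ ≤ C' * meanSum (σ * t) (β * t) G ν y := by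
        gcongr
        exact meanSum_anti (by gcongr) (by gcongr) G ν y
  rcases eq_or_ne C 0 with rfl | hC0
  · have hF0 : F ν x = 0 := by simpa using hC ν x
    simp [hF0, ENNReal.zero_rpow_of_pos ht]
  rcases eq_or_ne (meanSum (σ * t) (β * t) G ν x) ⊤ with htop | htop
  · rw [htop, ENNReal.mul_top hC0]
    exact le_top
  have hmax : maxSup σ β F ν x ^ t ≠ ⊤ := by
    rw [maxSup_rpow ht]
    exact ne_top_of_le_ne_top (ENNReal.mul_ne_top hC'top htop)
      (maxSup_le_of_forall (by positivity) hweak ν x)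
  calc F ν x ^ t ≤ maxSup σ β F ν x ^ t := by gcongr; exact le_maxSup ν x
    _ ≤ _ := maxSup_rpow_le_of_ne_top hβ ht ht1 hF hC
      ((ENNReal.rpow_eq_top_iff_of_pos ht).not.1 hmax)

lemma measurable_two_pow_mul_dyadicWeight (σ β : ℝ) (ν : ℕ) (x : E) :
    Measurable fun p : ℕ × E =>
      2 ^ ((p.1 + ν) * Module.finrank ℝ E) * dyadicWeight σ β p.1 ν x p.2 :=
  measurable_from_prod_countable_right fun j =>
    (measurable_dyadicWeight σ β j ν x).const_mul (2 ^ ((j + ν) * Module.finrank ℝ E))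

section Jensen

variable [SFinite (volume : Measure E)]

lemma meanSum_eq_lintegral_prod {G : ℕ → E → ℝ≥0∞} (hG : ∀ m, Measurable (G m)) (σ β : ℝ) (ν : ℕ)
    (x : E) :
    meanSum σ β G ν x =
      ∫⁻ p : ℕ × E, 2 ^ ((p.1 + ν) * Module.finrank ℝ E) * dyadicWeight σ β p.1 ν x p.2 *
        G (p.1 + ν) p.2 ∂(Measure.count.prod volume) := by
  have hG' : Measurable fun p : ℕ × E => G (p.1 + ν) p.2 :=
    measurable_from_prod_countable_right fun j => hG (j + ν)
  rw [lintegral_prod _ ((measurable_two_pow_mul_dyadicWeight σ β ν x).fun_mul hG').aemeasurable,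
    lintegral_count, meanSum]
  refine tsum_congr fun j => ?_
  simp only [mul_assoc]
  exact (lintegral_const_mul _ ((measurable_dyadicWeight σ β j ν x).mul (hG _))).symm

lemma meanSum_rpow_le {G : ℕ → E → ℝ≥0∞} (hG : ∀ m, Measurable (G m)) (σ β : ℝ) {t : ℝ}
    (ht : 1 ≤ t) (ν : ℕ) (x : E) :
    meanSum σ β G ν x ^ t ≤
      meanSum σ β 1 ν x ^ (t - 1) * meanSum σ β (fun m z => G m z ^ t) ν x := by
  rw [meanSum_eq_lintegral_prod hG, meanSum_eq_lintegral_prod fun m => (hG m).pow_const t,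
    meanSum_eq_lintegral_prod (G := 1) fun _ => measurable_one]
  simp only [Pi.one_apply, mul_one]
  exact rpow_lintegral_mul_le _ (measurable_two_pow_mul_dyadicWeight σ β ν x)
    (measurable_from_prod_countable_right fun j => hG (j + ν)) ht

lemma rpow_le_meanSum_of_one_le {σ β t : ℝ} (ht : 1 ≤ t) {C : ℝ≥0∞}
    (hF : ∀ m, Measurable (F m)) (hC : ∀ ν y, F ν y ≤ C * meanSum σ β F ν y) (ν : ℕ) (x : E) :
    F ν x ^ t ≤ C ^ t * meanSum σ β 1 ν x ^ (t - 1) *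
      meanSum σ β (fun m z => F m z ^ t) ν x := by
  have ht0 : 0 ≤ t := by linarith
  calc F ν x ^ t ≤ (C * meanSum σ β F ν x) ^ t := by gcongr; exact hC ν x
    _ = C ^ t * meanSum σ β F ν x ^ t := ENNReal.mul_rpow_of_nonneg _ _ ht0
    _ ≤ C ^ t * (meanSum σ β 1 ν x ^ (t - 1) * meanSum σ β (fun m z => F m z ^ t) ν x) := by
        gcongr
        exact meanSum_rpow_le hF σ β ht ν x
    _ = _ := (mul_assoc _ _ _).symm

end Jensen

variable [FiniteDimensional ℝ E] [(volume : Measure E).IsAddHaarMeasure]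

lemma two_pow_mul_lintegral_dyadicWeight (σ β : ℝ) (j ν : ℕ) (x : E) :
    2 ^ (ν * Module.finrank ℝ E) * ∫⁻ z, dyadicWeight σ β j ν x z =
      ENNReal.ofReal (2 ^ (-(σ * j))) * ∫⁻ z : E, ENNReal.ofReal ((1 + ‖z‖) ^ (-β)) := by
  have hscale : ∀ z : E, dyadicWeight σ β j ν x z =
      ENNReal.ofReal (2 ^ (-(σ * j))) *
        ENNReal.ofReal ((1 + ‖(2 : ℝ) ^ ν • (x - z)‖) ^ (-β)) := fun z => by
    rw [dyadicWeight, ENNReal.ofReal_mul (by positivity), norm_smul, norm_pow, Real.norm_ofNat]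
  have hmeas : Measurable fun z : E => ENNReal.ofReal ((1 + ‖z‖) ^ (-β)) := by fun_prop
  simp_rw [hscale]
  rw [lintegral_const_mul' _ _ ENNReal.ofReal_ne_top, mul_left_comm,
    lintegral_sub_left_eq_self
      (fun w => ENNReal.ofReal ((1 + ‖(2 : ℝ) ^ ν • w‖) ^ (-β))) x,
    ← lintegral_map hmeas (measurable_const_smul _),
    Measure.map_addHaar_smul _ (by positivity), lintegral_smul_measure, smul_eq_mul,
    ← mul_assoc (2 ^ (ν * Module.finrank ℝ E)), abs_of_pos (by positivity),
    ENNReal.ofReal_inv_of_pos (by positivity),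
    ← pow_mul, ENNReal.ofReal_pow zero_le_two, ENNReal.ofReal_ofNat,
    ENNReal.mul_inv_cancel (by positivity) (by finiteness), one_mul]

lemma meanSum_one (σ β : ℝ) (ν : ℕ) (x : E) :
    meanSum σ β 1 ν x = (∑' j : ℕ, ENNReal.ofReal (((2 : ℝ) ^ (Module.finrank ℝ E - σ)) ^ j)) *
      ∫⁻ z : E, ENNReal.ofReal ((1 + ‖z‖) ^ (-β)) := by
  rw [meanSum, ← ENNReal.tsum_mul_right]
  refine tsum_congr fun j => ?_
  simp only [Pi.one_apply, mul_one]
  rw [add_mul, pow_add, mul_assoc, two_pow_mul_lintegral_dyadicWeight, ← mul_assoc,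
    ← ENNReal.ofReal_ofNat, ← ENNReal.ofReal_pow zero_le_two, ← ENNReal.ofReal_mul (by positivity),
    ← Real.rpow_natCast, ← Real.rpow_natCast, ← Real.rpow_mul zero_le_two, ← Real.rpow_add two_pos]
  congr 3
  push_cast
  ring

lemma meanSum_one_ne_top {σ β : ℝ} (hσ : Module.finrank ℝ E < σ) (hβ : Module.finrank ℝ E < β)
    (ν : ℕ) (x : E) :
    meanSum σ β 1 ν x ≠ ⊤ := by
  rw [meanSum_one]
  exact ENNReal.mul_ne_top
    (summable_geometric_of_lt_one (by positivity)
      (Real.rpow_lt_one_of_one_lt_of_neg one_lt_two (sub_neg.2 hσ))).tsum_ofReal_ne_top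
    (finite_integral_one_add_norm hβ).ne

end IntegralMeans

/-! ### Littlewood-Paley pieces of a tempered distribution -/

section LittlewoodPaley

lemma exists_norm_distConv_fourier_le (f : TemperedDist n) :
    ∃ M N : ℕ, ∃ C : ℝ≥0, ∀ (ψ : 𝓢(Rn n, ℂ)) (y : Rn n),
      ‖distConv (𝓕 ψ) f y‖ ≤ C * (1 + ‖y‖) ^ N * schwartzNorm ℂ M ψ := by
  obtain ⟨N, A, hA⟩ := exists_le_schwartzNorm (p := (normSeminorm ℂ ℂ).comp f.toLinearMap)
    (continuous_norm.comp f.continuous)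
  obtain ⟨M, B, hB⟩ := exists_schwartzNorm_map_le (fourierInvCLM ℂ 𝓢(Rn n, ℂ)) N
  refine ⟨M, N, A * 2 ^ N * B, fun ψ y => ?_⟩
  rw [distConv_fourier]
  calc ‖f ((𝓕⁻ ψ).compSubConstCLM ℂ y)‖
      ≤ A * schwartzNorm ℂ N ((𝓕⁻ ψ).compSubConstCLM ℂ y) := hA _
    _ ≤ A * (2 ^ N * (1 + ‖y‖) ^ N * (B * schwartzNorm ℂ M ψ)) := by
        gcongr
        refine (schwartzNorm_compSubConstCLM_le N y (𝓕⁻ ψ)).trans ?_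
        gcongr
        exact hB ψ
    _ = _ := by
        push_cast
        ring

lemma enorm_distConv_fourier_le_tsum {u : ℕ → 𝓢(Rn n, ℂ)} {ψ : 𝓢(Rn n, ℂ)}
    (hu : Tendsto (fun J => ∑ j ∈ Finset.range J, u j) atTop (𝓝 ψ)) (f : TemperedDist n)
    (y : Rn n) : ‖distConv (𝓕 ψ) f y‖ₑ ≤ ∑' j, ‖distConv (𝓕 (u j)) f y‖ₑ := by
  let T : 𝓢(Rn n, ℂ) →L[ℂ] ℂ :=
    f ∘L SchwartzMap.compSubConstCLM ℂ y ∘L fourierInvCLM ℂ 𝓢(Rn n, ℂ)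
  have hT (φ) : distConv (𝓕 φ) f y = T φ := distConv_fourier φ f y
  simp only [hT]
  refine le_of_tendsto' ((T.continuous.tendsto ψ).comp hu).enorm fun J => ?_
  calc ‖T (∑ j ∈ Finset.range J, u j)‖ₑ
      ≤ ∑ j ∈ Finset.range J, ‖T (u j)‖ₑ := by rw [map_sum]; exact enorm_sum_le _ _
    _ ≤ ∑' j, ‖T (u j)‖ₑ := ENNReal.sum_le_tsum _

lemma enorm_distConv_fourier_schwartzMul_dilate_le {κ : 𝓢(Rn n, ℂ)} {B σ β : ℝ} {j : ℕ}
    (hB : 0 ≤ B)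
    (hκ : ∀ x, ‖𝓕 κ x‖ ≤ B * ((2 : ℝ) ^ (-(σ * j)) * (1 + ‖x‖) ^ (-β)))
    (ψ : 𝓢(Rn n, ℂ)) (f : TemperedDist n) (ν : ℕ) (y : Rn n) :
    ‖distConv (𝓕 (schwartzMul (dilate (-ν) κ) ψ)) f y‖ₑ ≤ ENNReal.ofReal B *
      (2 ^ (ν * Module.finrank ℝ (Rn n)) *
        ∫⁻ z, dyadicWeight σ β j ν y z * ‖distConv (𝓕 ψ) f z‖ₑ) := by
  have hdil (w : Rn n) : ‖𝓕 (dilate (-ν) κ) w‖ ≤ B *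
      (2 ^ (ν * Module.finrank ℝ (Rn n)) *
        ((2 : ℝ) ^ (-(σ * j)) * (1 + 2 ^ ν * ‖w‖) ^ (-β))) := by
    have h := hκ ((2 : ℝ) ^ ν • w)
    rw [norm_smul, norm_pow, Real.norm_ofNat] at h
    rw [fourier_dilate_neg_apply, norm_smul, norm_pow, Real.norm_ofNat, mul_left_comm]
    gcongr
  rw [distConv_fourier_schwartzMul, ← lintegral_const_mul' _ _ (by finiteness),
    ← lintegral_const_mul' _ _ ENNReal.ofReal_ne_top]
  refine (enorm_integral_le_lintegral_enorm _).trans ?_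
  rw [← lintegral_sub_left_eq_self _ y]
  refine lintegral_mono fun z => ?_
  rw [_root_.sub_sub_cancel, enorm_mul, ← mul_assoc, ← mul_assoc]
  gcongr
  rw [← ofReal_norm]
  refine (ENNReal.ofReal_le_ofReal (hdil (y - z))).trans_eq ?_
  rw [dyadicWeight, ENNReal.ofReal_mul hB, ENNReal.ofReal_mul (by positivity),
    ENNReal.ofReal_pow zero_le_two, ENNReal.ofReal_ofNat, mul_assoc]

variable {ψ : ℕ → 𝓢(Rn n, ℂ)}

lemma exists_enorm_distConv_fourier_le_of_dilate
    (hψ : ∀ j : ℕ, ψ (j + 1) = dilate (-j) (ψ 1)) (f : TemperedDist n) :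
    ∃ C : ℝ≥0∞, C ≠ ⊤ ∧ ∃ p : ℝ, 0 ≤ p ∧ ∀ m y,
      ‖distConv (𝓕 (ψ m)) f y‖ₑ ≤ C * ENNReal.ofReal (2 ^ m * (1 + ‖y‖)) ^ p := by
  obtain ⟨M, N, A, hA⟩ := exists_norm_distConv_fourier_le f
  set B : ℝ := schwartzNorm ℂ M (ψ 0) + schwartzNorm ℂ M (ψ 1) with hB
  have hψ_norm : ∀ m : ℕ, schwartzNorm ℂ M (ψ m) ≤ 2 ^ (m * M) * B
    | 0 => by simp [hB]
    | m + 1 => by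
      rw [hψ]
      refine (schwartzNorm_dilate_neg_le M m (ψ 1)).trans ?_
      gcongr
      · exact one_le_two
      · exact Nat.le_succ m
      · exact le_add_of_nonneg_left (apply_nonneg _ _)
  refine ⟨ENNReal.ofReal (A * B), ENNReal.ofReal_ne_top, (N + M : ℕ), Nat.cast_nonneg _,
    fun m y => ?_⟩
  rw [ENNReal.rpow_natCast, ← ENNReal.ofReal_pow (by positivity),
    ← ENNReal.ofReal_mul (by positivity), ← ofReal_norm]
  refine ENNReal.ofReal_le_ofReal ?_
  calc ‖distConv (𝓕 (ψ m)) f y‖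
      ≤ A * (1 + ‖y‖) ^ N * (2 ^ (m * M) * B) := (hA _ y).trans (by gcongr; exact hψ_norm m)
    _ = A * B * ((1 + ‖y‖) ^ N * (2 ^ m) ^ M) := by rw [pow_mul]; ring
    _ ≤ A * B * ((2 ^ m * (1 + ‖y‖)) ^ N * (2 ^ m * (1 + ‖y‖)) ^ M) := by
        gcongr
        · exact le_mul_of_one_le_left (by positivity) (one_le_pow₀ one_le_two)
        · exact le_mul_of_one_le_right (by positivity) (by simp)
    _ = _ := by rw [pow_add]

variable {ε k : ℝ}

lemma exists_enorm_distConv_le_meanSum (hε : 0 < ε) (hk : 1 < k)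
    (hψ1 : ∀ x, ε ≤ ‖x‖ → ‖x‖ ≤ 2 * k * ε → ψ 1 x ≠ 0)
    (hψ : ∀ j : ℕ, ψ (j + 1) = dilate (-j) (ψ 1)) (σ β : ℝ) :
    ∃ C : ℝ≥0∞, C ≠ ⊤ ∧ ∀ (f : TemperedDist n) (ν : ℕ) (y : Rn n),
      ‖distConv (𝓕 (ψ ν)) f y‖ₑ ≤
        C * meanSum σ β (fun m z => ‖distConv (𝓕 (ψ m)) f z‖ₑ) ν y := by
  obtain ⟨χ, lam, hχ, hlam, hdiff⟩ := exists_schwartzMul_eq_dilate_sub hε hk hψ1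
  obtain ⟨C, hC0, hC⟩ := exists_norm_fourier_calderonKernel_dilate_le χ hψ hε hlam σ β
  refine ⟨ENNReal.ofReal C, ENNReal.ofReal_ne_top, fun f ν y => ?_⟩
  refine (enorm_distConv_fourier_le_tsum (tendsto_sum_calderonKernel hψ hε hχ hdiff ν) f y).trans ?_
  rw [meanSum, ← ENNReal.tsum_mul_left]
  refine ENNReal.tsum_le_tsum fun j =>
    (enorm_distConv_fourier_schwartzMul_dilate_le hC0 (hC ν j) _ f ν y).trans ?_
  gcongr
  · exact one_le_two
  · exact Nat.le_add_left ν j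

lemma exists_enorm_distConv_rpow_le_meanSum (hε : 0 < ε) (hk : 1 < k)
    (hψ1 : ∀ x, ε ≤ ‖x‖ → ‖x‖ ≤ 2 * k * ε → ψ 1 x ≠ 0)
    (hψ : ∀ j : ℕ, ψ (j + 1) = dilate (-j) (ψ 1)) (σ : ℝ) {β t : ℝ} (hβ : 0 ≤ β) (ht : 0 < t) :
    ∃ c : ℝ≥0∞, c ≠ ⊤ ∧ ∀ (f : TemperedDist n) (ν : ℕ) (y : Rn n),
      ‖distConv (𝓕 (ψ ν)) f y‖ₑ ^ t ≤
        c * meanSum (σ * t) (β * t) (fun m z => ‖distConv (𝓕 (ψ m)) f z‖ₑ ^ t) ν y := by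
  have hmeas (f : TemperedDist n) (m : ℕ) : Measurable fun z => ‖distConv (𝓕 (ψ m)) f z‖ₑ :=
    (continuous_distConv_fourier (ψ m) f).enorm.measurable
  have hrep := exists_enorm_distConv_le_meanSum hε hk hψ1 hψ
  rcases le_total t 1 with ht1 | ht1
  · obtain ⟨C, hCtop, hC⟩ := hrep σ β
    refine ⟨C, hCtop, fun f => ?_⟩
    obtain ⟨K, hK, p, hp, hgrowth⟩ := exists_enorm_distConv_fourier_le_of_dilate hψ f
    obtain ⟨C', hC'top, hC'⟩ := hrep (max σ p) (max β p)
    exact rpow_le_meanSum_of_le_one hβ (le_max_left _ _) (le_max_left _ _) ht ht1 hC'top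
      (hmeas f) (hC f) (hC' f)
      (maxSup_ne_top hK hp hgrowth (le_max_right _ _) (le_max_right _ _))
  · set σ' := max (σ * t) (Module.finrank ℝ (Rn n) + 1)
    set β' := max (β * t) (Module.finrank ℝ (Rn n) + 1)
    obtain ⟨C, hCtop, hC⟩ := hrep σ' β'
    have hone := meanSum_one_ne_top (E := Rn n) (σ := σ') (β := β')
      ((lt_add_one _).trans_le (le_max_right _ _)) ((lt_add_one _).trans_le (le_max_right _ _)) 0 0
    refine ⟨C ^ t * meanSum σ' β' 1 0 (0 : Rn n) ^ (t - 1), ENNReal.mul_ne_top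
      (ENNReal.rpow_ne_top_of_nonneg ht.le hCtop)
      (ENNReal.rpow_ne_top_of_nonneg (sub_nonneg.2 ht1) hone), fun f ν y => ?_⟩
    refine (rpow_le_meanSum_of_one_le ht1 (hmeas f) (hC f) ν y).trans ?_
    rw [meanSum_one, ← meanSum_one σ' β' 0 (0 : Rn n)]
    gcongr
    exact meanSum_anti (le_max_left _ _) (le_max_left _ _) _ ν y

end LittlewoodPaley

/-! ### The Peetre maximal function -/

section PeetreMax

lemma one_add_rpow_le_mul {s a : ℝ} (hs : 0 ≤ s) (ha : 0 ≤ a) :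
    (1 + s) ^ a ≤ 2 ^ a * (1 + s ^ a) := by
  have hsa : 0 ≤ s ^ a := Real.rpow_nonneg hs a
  rcases le_total 1 s with h | h
  · calc (1 + s) ^ a ≤ (2 * s) ^ a := Real.rpow_le_rpow (by positivity) (by linarith) ha
      _ = 2 ^ a * s ^ a := Real.mul_rpow zero_le_two hs
      _ ≤ _ := by gcongr; linarith
  · calc (1 + s) ^ a ≤ 2 ^ a := Real.rpow_le_rpow (by positivity) (by linarith) ha
      _ ≤ _ := le_mul_of_one_le_right (by positivity) (by linarith)

lemma one_add_rpow_le_two_mul {s a : ℝ} (hs : 0 ≤ s) (ha : 0 ≤ a) :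
    1 + s ^ a ≤ 2 * (1 + s) ^ a := by
  have hle : s ^ a ≤ (1 + s) ^ a := Real.rpow_le_rpow hs (by linarith) ha
  have hone : 1 ≤ (1 + s) ^ a := Real.one_le_rpow (by linarith) ha
  linarith

lemma peetreMax_le_maxSup {a : ℝ} (ha : 0 ≤ a) (σ : ℝ) (F : ℕ → Rn n → ℂ) (ν : ℕ) (x : Rn n) :
    peetreMax a ν (F ν) x ≤
      ENNReal.ofReal (2 ^ a) * maxSup σ a (fun m z => ‖F m z‖ₑ) ν x := by
  refine iSup_le fun y => ?_
  have hs : 0 ≤ 2 ^ ν * ‖x - y‖ := by positivity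
  have hweight : (ENNReal.ofReal (1 + (2 ^ ν * ‖x - y‖) ^ a))⁻¹ ≤
      ENNReal.ofReal (2 ^ a) * dyadicWeight σ a 0 ν x y := by
    rw [dyadicWeight, Nat.cast_zero, mul_zero, neg_zero, Real.rpow_zero, one_mul,
      Real.rpow_neg (by positivity), ← ENNReal.ofReal_mul (by positivity),
      ← ENNReal.ofReal_inv_of_pos (by positivity), ← div_eq_mul_inv]
    refine ENNReal.ofReal_le_ofReal ?_
    rw [inv_le_comm₀ (by positivity) (by positivity), inv_div, div_le_iff₀' (by positivity)]
    exact one_add_rpow_le_mul hs ha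
  calc ‖F ν y‖ₑ / ENNReal.ofReal (1 + (2 ^ ν * ‖y - x‖) ^ a)
      = (ENNReal.ofReal (1 + (2 ^ ν * ‖x - y‖) ^ a))⁻¹ * ‖F ν y‖ₑ := by
        rw [div_eq_mul_inv, mul_comm, norm_sub_rev]
    _ ≤ ENNReal.ofReal (2 ^ a) * (dyadicWeight σ a 0 ν x y * ‖F (0 + ν) y‖ₑ) := by
        rw [zero_add, ← mul_assoc]
        gcongr
    _ ≤ _ := by gcongr; exact dyadicWeight_mul_le_maxSup 0 ν x y

lemma dyadicWeight_mul_le_ofReal (σ : ℝ) {a t : ℝ} (ha : 0 ≤ a) (ht : 0 ≤ t) (j ν : ℕ)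
    (x z : Rn n) :
    dyadicWeight (σ * t) (a * t) j ν x z ≤ ENNReal.ofReal (2 ^ t) *
      (ENNReal.ofReal (2 ^ (-(j : ℝ) * σ * t)) *
        (ENNReal.ofReal ((1 + (2 ^ ν * ‖x - z‖) ^ a) ^ t))⁻¹) := by
  have hs : 0 ≤ 2 ^ ν * ‖x - z‖ := by positivity
  rw [dyadicWeight, ← ENNReal.ofReal_inv_of_pos (by positivity),
    ← ENNReal.ofReal_mul (by positivity), ← ENNReal.ofReal_mul (by positivity), mul_left_comm]
  refine ENNReal.ofReal_le_ofReal ?_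
  rw [show -(σ * t * j) = -(j : ℝ) * σ * t by ring]
  gcongr
  rw [Real.rpow_neg (by positivity), Real.rpow_mul (by positivity), ← div_eq_mul_inv,
    inv_le_comm₀ (by positivity) (by positivity), inv_div, div_le_iff₀' (by positivity),
    ← Real.mul_rpow zero_le_two (by positivity)]
  gcongr
  exact one_add_rpow_le_two_mul hs ha

lemma meanSum_le_tsum (σ : ℝ) {a t : ℝ} (ha : 0 ≤ a) (ht : 0 ≤ t) (G : ℕ → Rn n → ℝ≥0∞)
    (ν : ℕ) (x : Rn n) :
    meanSum (σ * t) (a * t) G ν x ≤ ENNReal.ofReal (2 ^ t) * ∑' j : ℕ,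
      ENNReal.ofReal ((2 : ℝ) ^ (-(j : ℝ) * σ * t) * (2 : ℝ) ^ ((j + ν) * n)) *
        ∫⁻ z : Rn n, G (j + ν) z / ENNReal.ofReal ((1 + ((2 : ℝ) ^ ν * ‖x - z‖) ^ a) ^ t) := by
  rw [meanSum, ← ENNReal.tsum_mul_left, finrank_euclideanSpace_fin]
  refine ENNReal.tsum_le_tsum fun j => ?_
  rw [ENNReal.ofReal_mul (by positivity), ENNReal.ofReal_pow zero_le_two, ENNReal.ofReal_ofNat,
    mul_comm (ENNReal.ofReal _) (2 ^ _), mul_assoc, mul_left_comm,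
    ← lintegral_const_mul' _ _ ENNReal.ofReal_ne_top,
    ← lintegral_const_mul' _ _ ENNReal.ofReal_ne_top]
  refine mul_le_mul' le_rfl (lintegral_mono fun z => ?_)
  rw [ENNReal.div_eq_inv_mul, ← mul_assoc, ← mul_assoc, mul_assoc (ENNReal.ofReal _)]
  gcongr
  exact dyadicWeight_mul_le_ofReal σ ha ht j ν x z

end PeetreMax

section Estimate

variable {ε k : ℝ} {ψ : ℕ → 𝓢(Rn n, ℂ)}

lemma exists_peetreMax_rpow_le_meanSum (hε : 0 < ε) (hk : 1 < k)
    (hψ1 : ∀ x, ε ≤ ‖x‖ → ‖x‖ ≤ 2 * k * ε → ψ 1 x ≠ 0)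
    (hψ : ∀ j : ℕ, ψ (j + 1) = dilate (-j) (ψ 1)) (σ : ℝ) {a t : ℝ} (ha : 0 ≤ a) (ht : 0 < t) :
    ∃ c : ℝ≥0∞, c ≠ ⊤ ∧ ∀ (f : TemperedDist n) (ν : ℕ) (x : Rn n),
      peetreMax a ν (distConv (𝓕 (ψ ν)) f) x ^ t ≤
        c * meanSum (σ * t) (a * t) (fun m z => ‖distConv (𝓕 (ψ m)) f z‖ₑ ^ t) ν x := by
  obtain ⟨c, hc, h⟩ := exists_enorm_distConv_rpow_le_meanSum hε hk hψ1 hψ σ ha ht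
  refine ⟨ENNReal.ofReal (2 ^ a) ^ t * c, ENNReal.mul_ne_top
    (ENNReal.rpow_ne_top_of_nonneg ht.le ENNReal.ofReal_ne_top) hc, fun f ν x => ?_⟩
  calc peetreMax a ν (distConv (𝓕 (ψ ν)) f) x ^ t
      ≤ (ENNReal.ofReal (2 ^ a) *
          maxSup σ a (fun m z => ‖distConv (𝓕 (ψ m)) f z‖ₑ) ν x) ^ t := by
        gcongr
        exact peetreMax_le_maxSup ha σ (fun m => distConv (𝓕 (ψ m)) f) ν x
    _ = ENNReal.ofReal (2 ^ a) ^ t *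
          maxSup (σ * t) (a * t) (fun m z => ‖distConv (𝓕 (ψ m)) f z‖ₑ ^ t) ν x := by
        rw [ENNReal.mul_rpow_of_nonneg _ _ ht.le, maxSup_rpow ht]
    _ ≤ _ := by
        rw [mul_assoc]
        gcongr
        exact maxSup_le_of_forall (by positivity) (h f) ν x

theorem statement14_general (hε : 0 < ε) (hk : 1 < k)
    (hψ1 : ∀ x, ε ≤ ‖x‖ → ‖x‖ ≤ 2 * k * ε → ψ 1 x ≠ 0)
    (hψ : ∀ j : ℕ, 2 ≤ j → ∀ x, ψ j x = ψ 1 ((2 : ℝ) ^ (-(j : ℝ) + 1) • x))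
    {t : ℝ} (ht : 0 < t) (σ : ℝ) {a : ℝ} (ha : 0 ≤ a) :
    ∃ c : ℝ, 0 < c ∧ ∀ (f : TemperedDist n) (ν : ℕ) (x : Rn n),
      peetreMax a ν (distConv (𝓕 (ψ ν)) f) x ^ t ≤
        ENNReal.ofReal c * ∑' j : ℕ,
          ENNReal.ofReal ((2 : ℝ) ^ (-(j : ℝ) * σ * t) * (2 : ℝ) ^ ((j + ν) * n)) *
            ∫⁻ z : Rn n, ‖distConv (𝓕 (ψ (j + ν))) f z‖ₑ ^ t /
              ENNReal.ofReal ((1 + ((2 : ℝ) ^ ν * ‖x - z‖) ^ a) ^ t) := by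
  have hdil : ∀ j : ℕ, ψ (j + 1) = dilate (-j) (ψ 1)
    | 0 => by ext x; rw [dilate_apply, Nat.cast_zero, neg_zero, zpow_zero, one_smul]
    | j + 1 => by
      ext x
      rw [hψ (j + 1 + 1) (by lia), dilate_apply, ← Real.rpow_intCast]
      push_cast
      ring_nf
  obtain ⟨c, hc, h⟩ := exists_peetreMax_rpow_le_meanSum hε hk hψ1 hdil σ ha ht
  have hctop : c * ENNReal.ofReal (2 ^ t) ≠ ⊤ := ENNReal.mul_ne_top hc ENNReal.ofReal_ne_top
  refine ⟨(c * ENNReal.ofReal (2 ^ t)).toReal + 1, by positivity, fun f ν x => ?_⟩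
  refine (h f ν x).trans ((mul_le_mul_right (meanSum_le_tsum σ ha ht.le _ ν x) c).trans ?_)
  rw [← mul_assoc]
  gcongr
  exact (ENNReal.ofReal_toReal hctop).symm.trans_le
    (ENNReal.ofReal_le_ofReal (le_add_of_nonneg_right zero_le_one))

end Estimate

end

/-- the pointwise estimate for the Peetre maximal function in terms of
integral means of the convolutions `Ψ_{j+ν} ∗ f` (Ullrich's estimate (2.66)). -/
theorem statement14 (n : ℕ) (eps k : ℝ) (heps : 0 < eps) (hk1 : 1 < k) (hk2 : k ≤ 2)
    (psi0 psi1 : SchwartzMap (Rn n) ℂ)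
    (hpsi0 : ∀ x : Rn n, ‖x‖ ≤ k * eps → 0 < ‖psi0 x‖)
    (hpsi1 : ∀ x : Rn n, eps ≤ ‖x‖ → ‖x‖ ≤ 2 * k * eps → 0 < ‖psi1 x‖)
    (psis : ℕ → SchwartzMap (Rn n) ℂ)
    (hpsis0 : psis 0 = psi0) (hpsis1 : psis 1 = psi1)
    (hpsis : ∀ j : ℕ, 2 ≤ j → ∀ x : Rn n, psis j x = psi1 ((2 : ℝ) ^ (-(j : ℝ) + 1) • x))
    (t : ℝ) (ht : 0 < t) (N : ℕ) (a : ℝ) (ha : 0 < a) (haN : a ≤ N) :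
    ∃ c : ℝ, 0 < c ∧ ∀ (f : TemperedDist n) (ν : ℕ) (x : Rn n),
      (peetreMax a ν (distConv (SchwartzMap.fourierTransformCLM ℂ (psis ν)) f) x) ^ t ≤
        ENNReal.ofReal c * ∑' j : ℕ,
          ENNReal.ofReal ((2 : ℝ) ^ (-(j : ℝ) * N * t) * (2 : ℝ) ^ ((j + ν) * n)) *
            ∫⁻ z : Rn n,
              (‖distConv (SchwartzMap.fourierTransformCLM ℂ (psis (j + ν))) f z‖₊ : ℝ≥0∞) ^ t /
                ENNReal.ofReal ((1 + ((2 : ℝ) ^ ν * ‖x - z‖) ^ a) ^ t) := by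
  subst hpsis1
  exact statement14_general heps hk1 (fun x h h' => norm_pos_iff.1 (hpsi1 x h h')) hpsis ht N ha.le

end
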